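/- For every integer n > 1, (p(n-1)/p(n)) · (1 + 1/n) > p(n)/p(n+1). -/

import Mathlib

open Real

/-- The partition function, as a real number. -/
noncomputable def p (n : ℕ) : ℝ := (Fintype.card (Nat.Partition n) : ℝ)

/-!
With `F x = ∑ p n * x ^ n`, Cauchy's formula on the circle of radius `x` reads
`π * (p m * x ^ m) = F x * I m`, where `I m` integrates `|F (x * exp (θ * I))| / F x` times an
oscillating factor over `[0, π]`. Using one radius for three consecutive `m`, the ratio
`p (n - 1) * p (n + 1) / p n ^ 2` becomes `I (n - 1) * I (n + 1) / I n ^ 2`. At the saddle point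
`x = 1 - s ^ 2`, where `n * s ^ 6` is small, the integrand is concentrated on `|θ| ≲ s ^ 3`, so that
`I n` is of order `s ^ 3` while the first and second differences of `I` are at most of order `s ^ 6`
and `s ^ 9`. Hence the ratio exceeds `1 - 1 / (n + 1)` once `4098 ≤ n`. For smaller `n` the values
of `p` are computed: the inverse of the pentagonal series, evaluated at `2 ^ 256`, has them as
digits.
-/

namespace PartitionRatio

open Finset intervalIntegral MeasureTheory
open scoped Nat ArithmeticFunction.sigma

/-! ### The divisor-sum recurrence -/

/-- The number of times the part `a` occurs in all partitions of `n` together; counting the parts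
of all partitions in two ways turns it into the divisor-sum recurrence. -/
def occurrences (a n : ℕ) : ℕ := ∑ l : n.Partition, l.parts.count a

theorem occurrences_of_lt {a n : ℕ} (h : n < a) : occurrences a n = 0 :=
  sum_eq_zero fun _ _ => Multiset.count_eq_zero.2 fun ha =>
    (Nat.Partition.le_of_mem_parts ha).not_gt h

theorem occurrences_eq_add {a n : ℕ} (ha : 0 < a) (han : a ≤ n) :
    occurrences a n = Fintype.card (n - a).Partition + occurrences a (n - a) := by
  have hsub : occurrences a n =
      ∑ l : {l : n.Partition // a ∈ l.parts}, l.1.parts.count a := by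
    rw [← sum_subtype (univ.filter fun l : n.Partition => a ∈ l.parts) (by simp)
      (fun l : n.Partition => l.parts.count a), sum_filter_of_ne]
    · rfl
    · exact fun l _ hl => Multiset.count_ne_zero.1 hl
  rw [hsub, ← (Nat.Partition.partitionWithPartEquiv ha han).symm.sum_comp]
  simp [occurrences, sum_add_distrib, add_comm]

theorem filter_dvd_Icc_add_self {a : ℕ} (ha : 0 < a) (n : ℕ) :
    (Icc 1 (n + a)).filter (a ∣ ·) =
      insert a (((Icc 1 n).filter (a ∣ ·)).map (addRightEmbedding a)) := by
  ext k
  simp only [mem_filter, mem_Icc, mem_insert, mem_map, addRightEmbedding_apply]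
  constructor
  · rintro ⟨hk, hd⟩
    have := Nat.le_of_dvd (by lia) hd
    rcases eq_or_ne k a with h | h
    · exact Or.inl h
    · exact Or.inr ⟨k - a, ⟨by lia, Nat.dvd_sub hd dvd_rfl⟩, by lia⟩
  · rintro (rfl | ⟨j, ⟨hj, hd⟩, rfl⟩)
    · exact ⟨by lia, dvd_rfl⟩
    · exact ⟨by lia, hd.add dvd_rfl⟩

theorem occurrences_eq_sum {a : ℕ} (ha : 0 < a) (n : ℕ) :
    occurrences a n = ∑ k ∈ Icc 1 n with a ∣ k, Fintype.card (n - k).Partition := by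
  induction n using Nat.strong_induction_on with
  | _ n ih =>
    rcases lt_or_ge n a with h | h
    · rw [occurrences_of_lt h, sum_eq_zero]
      intro k hk
      simp only [mem_filter, mem_Icc] at hk
      have := Nat.le_of_dvd (by lia) hk.2
      lia
    · obtain ⟨m, rfl⟩ := Nat.exists_eq_add_of_le' h
      rw [occurrences_eq_add ha h, Nat.add_sub_cancel, ih m (by lia), filter_dvd_Icc_add_self ha,
        sum_insert (by simp), sum_map]
      simp [Nat.add_sub_add_right]

theorem sum_mul_count_parts {n : ℕ} (l : n.Partition) :
    ∑ a ∈ Icc 1 n, a * l.parts.count a = n := by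
  conv_rhs => rw [← l.parts_sum, sum_multiset_count]
  simp only [smul_eq_mul, mul_comm]
  refine (sum_subset (fun a ha => ?_) fun a _ ha => ?_).symm
  · rw [Multiset.mem_toFinset] at ha
    exact mem_Icc.2 ⟨l.parts_pos ha, Nat.Partition.le_of_mem_parts ha⟩
  · rw [Multiset.mem_toFinset] at ha
    simp [Multiset.count_eq_zero.2 ha]

theorem mul_card_partition_eq_sum (n : ℕ) :
    n * Fintype.card n.Partition = ∑ k ∈ Icc 1 n, σ 1 k * Fintype.card (n - k).Partition := by
  calc n * Fintype.card n.Partition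
      = ∑ l : n.Partition, ∑ a ∈ Icc 1 n, a * l.parts.count a := by
        simp [sum_mul_count_parts, mul_comm]
    _ = ∑ a ∈ Icc 1 n, a * occurrences a n := by
        rw [sum_comm]
        simp [occurrences, mul_sum]
    _ = ∑ a ∈ Icc 1 n, ∑ k ∈ Icc 1 n with a ∣ k, a * Fintype.card (n - k).Partition := by
        refine sum_congr rfl fun a ha => ?_
        rw [occurrences_eq_sum (mem_Icc.1 ha).1, mul_sum]
    _ = ∑ k ∈ Icc 1 n, ∑ a ∈ k.divisors, a * Fintype.card (n - k).Partition := by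
        refine sum_comm' fun a k => ?_
        simp only [mem_filter, mem_Icc, Nat.mem_divisors]
        constructor
        · rintro ⟨_, hk, hd⟩
          exact ⟨⟨hd, by lia⟩, hk⟩
        · rintro ⟨⟨hd, _⟩, hk⟩
          have := Nat.le_of_dvd (by lia) hd
          have := Nat.pos_of_dvd_of_pos hd (by lia)
          exact ⟨by lia, hk, hd⟩
    _ = _ := by simp [ArithmeticFunction.sigma_one_apply, sum_mul]

theorem add_one_mul_p_eq_sum (n : ℕ) :
    (n + 1) * p (n + 1) = ∑ ij ∈ antidiagonal n, (σ 1 (ij.1 + 1) : ℝ) * p ij.2 := by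
  have h := mul_card_partition_eq_sum (n + 1)
  rw [← Ico_succ_right_eq_Icc, sum_Ico_eq_sum_range] at h
  rw [Nat.sum_antidiagonal_eq_sum_range_succ_mk]
  simp only [p]
  exact_mod_cast h.trans (sum_congr rfl fun k _ => by rw [add_comm 1 k, Nat.add_sub_add_right])

theorem p_pos (n : ℕ) : 0 < p n := Nat.cast_pos.2 Fintype.card_pos

theorem p_zero : p 0 = 1 := by simp [p]

/-! ### Moments of the divisor sums -/

/-- The moment `∑ kʲ σ₁(k) xᵏ`. With `x = e⁻ᵗ`, these are up to sign the derivatives with respect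
to `t` of the logarithm of the generating function of `p`. -/
noncomputable def sigmaMoment (j : ℕ) (x : ℝ) : ℝ := ∑' k : ℕ, (k : ℝ) ^ j * σ 1 k * x ^ k

variable {x : ℝ}

theorem summable_sigmaMoment (j : ℕ) (hx : 0 ≤ x) (hx1 : x < 1) :
    Summable fun k : ℕ => (k : ℝ) ^ j * σ 1 k * x ^ k := by
  have h := summable_pow_mul_geometric_of_norm_lt_one (j + 2)
    (show ‖x‖ < 1 by rwa [Real.norm_of_nonneg hx])
  refine h.of_nonneg_of_le (fun k => by positivity) fun k => ?_
  rw [pow_add]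
  have : (σ 1 k : ℝ) ≤ (k : ℝ) ^ 2 := by exact_mod_cast ArithmeticFunction.sigma_le_pow_succ 1 k
  gcongr

theorem sq_mul_pow_mul_one_sub_sq_le (hx : 0 ≤ x) (hx1 : x < 1) (m : ℕ) :
    ((m + 1 : ℕ) : ℝ) ^ 2 * x ^ m * (1 - x) ^ 2 ≤ (1 - x ^ (m + 1)) ^ 2 := by
  -- Cauchy-Schwarz for the two progressions `xⁱ` and `xᵐ⁻ⁱ`, which have the same sum.
  have hcs : ((m + 1 : ℕ) : ℝ) ^ 2 * x ^ m ≤ (∑ i ∈ range (m + 1), x ^ i) ^ 2 := by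
    have h := sum_sq_le_sum_mul_sum_of_sq_le_mul (range (m + 1)) (r := fun _ => √x ^ m)
      (f := fun i => x ^ i) (g := fun i => x ^ (m + 1 - 1 - i)) (fun i _ => by positivity)
      (fun i _ => by positivity) (fun i hi => by
        rw [← pow_mul, mul_comm, pow_mul, Real.sq_sqrt hx, ← pow_add]
        exact le_of_eq (congrArg _ (by have := mem_range.1 hi; lia)))
    rwa [sum_range_reflect (fun i => x ^ i), sum_const, card_range, nsmul_eq_mul, mul_pow,
      ← pow_mul, mul_comm m 2, pow_mul, Real.sq_sqrt hx, ← sq] at h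
  rw [← mul_neg_geom_sum, mul_pow, mul_comm ((1 - x) ^ 2)]
  gcongr

theorem pow_div_one_sub_pow_sq_le (hx : 0 ≤ x) (hx1 : x < 1) (d : ℕ+) :
    x ^ (d : ℕ) / (1 - x ^ (d : ℕ)) ^ 2 ≤ x / (1 - x) ^ 2 * (1 / ((d : ℕ) : ℝ) ^ 2) := by
  obtain ⟨m, hm⟩ := Nat.exists_eq_succ_of_ne_zero d.ne_zero
  rw [hm, Nat.succ_eq_add_one]
  have hpow : 0 < 1 - x ^ (m + 1) := sub_pos.2 (pow_lt_one₀ hx hx1 m.succ_ne_zero)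
  have : 0 < 1 - x := sub_pos.2 hx1
  rw [div_mul_div_comm, mul_one, div_le_div_iff₀ (by positivity) (by positivity)]
  calc x ^ (m + 1) * ((1 - x) ^ 2 * ((m + 1 : ℕ) : ℝ) ^ 2)
      = x * (((m + 1 : ℕ) : ℝ) ^ 2 * x ^ m * (1 - x) ^ 2) := by ring
    _ ≤ x * (1 - x ^ (m + 1)) ^ 2 := by gcongr; exact sq_mul_pow_mul_one_sub_sq_le hx hx1 m

theorem sigmaMoment_zero_eq_tsum (hx : 0 ≤ x) (hx1 : x < 1) :
    sigmaMoment 0 x = ∑' d : ℕ+, x ^ (d : ℕ) / (1 - x ^ (d : ℕ)) ^ 2 := by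
  have hnorm : ‖x‖ < 1 := by rwa [Real.norm_of_nonneg hx]
  have hmul (d : ℕ+) : ∑' c : ℕ+, (c : ℝ) ^ 1 * x ^ ((d : ℕ) * c) =
      x ^ (d : ℕ) / (1 - x ^ (d : ℕ)) ^ 2 := by
    have hd : ‖x ^ (d : ℕ)‖ < 1 := by
      rw [norm_pow]
      exact pow_lt_one₀ (norm_nonneg x) hnorm d.ne_zero
    rw [← tsum_coe_mul_geometric_of_norm_lt_one hd,
      ← tsum_zero_pnat_eq_tsum_nat (hasSum_coe_mul_geometric_of_norm_lt_one hd).summable]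
    simp [pow_mul]
  have hsum := summable_sigmaMoment 0 hx hx1
  rw [sigmaMoment, ← tsum_zero_pnat_eq_tsum_nat hsum]
  simpa [← hmul] using (tsum_prod_pow_eq_tsum_sigma 1 hnorm).symm

theorem sigmaMoment_zero_le (hx : 0 ≤ x) (hx1 : x < 1) :
    sigmaMoment 0 x ≤ π ^ 2 / 6 * (x / (1 - x) ^ 2) := by
  have hzeta : HasSum (fun d : ℕ+ => 1 / ((d : ℕ) : ℝ) ^ 2) (π ^ 2 / 6) := by
    have h := tsum_zero_pnat_eq_tsum_nat hasSum_zeta_two.summable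
    rw [hasSum_zeta_two.tsum_eq] at h
    have hs : Summable fun d : ℕ+ => 1 / ((d : ℕ) : ℝ) ^ 2 :=
      hasSum_zeta_two.summable.comp_injective PNat.coe_injective
    convert hs.hasSum using 1
    simpa using h.symm
  rw [sigmaMoment_zero_eq_tsum hx hx1, mul_comm, ← (hzeta.mul_left _).tsum_eq]
  have hle := pow_div_one_sub_pow_sq_le hx hx1
  have hnonneg (d : ℕ+) : 0 ≤ x ^ (d : ℕ) / (1 - x ^ (d : ℕ)) ^ 2 := by positivity
  exact ((hzeta.mul_left _).summable.of_nonneg_of_le hnonneg hle).tsum_le_tsum hle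
    (hzeta.mul_left _).summable

-- `kʲ` is absorbed by enlarging `1 - (j + 2) c` to `1 - 2 c`.
theorem pow_mul_one_sub_pow_le {c : ℝ} (hc : 0 < c) (j : ℕ) (hjc : (j + 2) * c ≤ 1) (k : ℕ) :
    (k : ℝ) ^ j * (1 - (j + 2) * c) ^ k ≤ (exp (-1) / c) ^ j * (1 - 2 * c) ^ k := by
  have hk : (k : ℝ) ≤ exp (-1) / c * exp (c * k) := by
    rw [div_mul_eq_mul_div, le_div_iff₀ hc, ← exp_add]
    linarith [add_one_le_exp (-1 + c * k)]
  have hbase : 1 - (j + 2) * c ≤ (1 - 2 * c) * exp (-(j * c)) := by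
    have hjc' : 0 ≤ j * c := by positivity
    calc 1 - (j + 2) * c ≤ (1 - 2 * c) * (1 - j * c) := by nlinarith
      _ ≤ _ := by
        gcongr
        · linarith
        · linarith [add_one_le_exp (-(j * c))]
  calc (k : ℝ) ^ j * (1 - (j + 2) * c) ^ k
      ≤ (exp (-1) / c * exp (c * k)) ^ j * ((1 - 2 * c) * exp (-(j * c))) ^ k := by
        gcongr
    _ = (exp (-1) / c) ^ j * (1 - 2 * c) ^ k * exp (j * (c * k) + k * -(j * c)) := by
        rw [mul_pow, mul_pow, exp_add, exp_nat_mul, exp_nat_mul]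
        ring
    _ = _ := by rw [show (j : ℝ) * (c * k) + k * -(j * c) = 0 by ring, exp_zero, mul_one]

theorem sigmaMoment_one_sub_le {c : ℝ} (hc : 0 < c) (j : ℕ) (hjc : (j + 2) * c ≤ 1) :
    sigmaMoment j (1 - (j + 2) * c) ≤ π ^ 2 / 6 * (exp (-1) ^ j / (4 * c ^ (j + 2))) := by
  have hc2 : 2 * c ≤ 1 := by nlinarith [show 0 ≤ j * c by positivity]
  have hsum := (summable_sigmaMoment 0 (sub_nonneg.2 hc2) (by linarith)).mul_left
    ((exp (-1) / c) ^ j)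
  calc sigmaMoment j (1 - (j + 2) * c)
      ≤ (exp (-1) / c) ^ j * sigmaMoment 0 (1 - 2 * c) := by
        rw [sigmaMoment, sigmaMoment, ← tsum_mul_left]
        refine (summable_sigmaMoment j (sub_nonneg.2 hjc) (by nlinarith)).tsum_le_tsum
          (fun k => ?_) hsum
        have := mul_le_mul_of_nonneg_right (pow_mul_one_sub_pow_le hc j hjc k)
          (Nat.cast_nonneg (σ 1 k))
        linarith
    _ ≤ (exp (-1) / c) ^ j * (π ^ 2 / 6 * (1 / (2 * c) ^ 2)) := by
        gcongr
        refine (sigmaMoment_zero_le (sub_nonneg.2 hc2) (by linarith)).trans ?_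
        rw [sub_sub_cancel]
        gcongr
        linarith
    _ = _ := by
        rw [div_pow]
        field_simp
        ring

/-! ### An elementary upper bound for the partition function -/

theorem exp_neg_div_one_sub_exp_neg_sq_le {t : ℝ} (ht : 0 < t) :
    exp (-t) / (1 - exp (-t)) ^ 2 ≤ 1 / t ^ 2 := by
  have hsinh : t * exp (-(t / 2)) ≤ 1 - exp (-t) := by
    have h := Real.self_le_sinh_iff.2 (half_pos ht).le
    rw [sinh_eq] at h
    calc t * exp (-(t / 2)) ≤ (exp (t / 2) - exp (-(t / 2))) * exp (-(t / 2)) := by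
          gcongr
          linarith
      _ = 1 - exp (-t) := by rw [sub_mul, ← exp_add, ← exp_add, add_neg_cancel, exp_zero]; ring_nf
  have hlt : 0 < 1 - exp (-t) := sub_pos.2 (exp_lt_one_iff.2 (neg_neg_iff_pos.2 ht))
  rw [div_le_div_iff₀ (by positivity) (by positivity), one_mul]
  calc exp (-t) * t ^ 2 = (t * exp (-(t / 2))) ^ 2 := by
        rw [mul_pow, ← exp_nat_mul, mul_comm]
        ring_nf
    _ ≤ (1 - exp (-t)) ^ 2 := by gcongr

theorem sum_antidiagonal_sigma_mul_exp_le {t : ℝ} (ht : 0 < t) (n : ℕ) :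
    ∑ ij ∈ antidiagonal n, (σ 1 (ij.1 + 1) : ℝ) * exp (-t) ^ (ij.1 + 1) ≤
      π ^ 2 / 6 * (1 / t ^ 2) := by
  have hx1 : exp (-t) < 1 := exp_lt_one_iff.2 (neg_neg_iff_pos.2 ht)
  have h := (summable_sigmaMoment 0 (exp_pos _).le hx1).sum_le_tsum (range (n + 1 + 1))
    fun k _ => by positivity
  rw [sum_range_succ'] at h
  rw [Nat.sum_antidiagonal_eq_sum_range_succ (fun i _ => (σ 1 (i + 1) : ℝ) * exp (-t) ^ (i + 1))]
  calc _ ≤ sigmaMoment 0 (exp (-t)) := by simpa [sigmaMoment] using h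
    _ ≤ π ^ 2 / 6 * (exp (-t) / (1 - exp (-t)) ^ 2) := sigmaMoment_zero_le (exp_pos _).le hx1
    _ ≤ _ := by gcongr _ * ?_; exact exp_neg_div_one_sub_exp_neg_sq_le ht

theorem exp_mul_sqrt_le {c : ℝ} (hc : 0 ≤ c) {k j n : ℕ} (hn : n + 1 = k + 1 + j) :
    exp (c * √j) ≤ exp (c * √(n + 1)) * exp (-(c / (2 * √(n + 1)))) ^ (k + 1) := by
  have : 0 < √((n : ℝ) + 1) := Real.sqrt_pos.2 (by positivity)
  have hsqrt : √(j : ℝ) ≤ √((n : ℝ) + 1) - (k + 1) / (2 * √((n : ℝ) + 1)) := by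
    rw [le_sub_iff_add_le, ← le_sub_iff_add_le', div_le_iff₀ (by positivity)]
    have hk : √((n : ℝ) + 1) ^ 2 = k + 1 + j := by
      rw [Real.sq_sqrt (by positivity)]
      exact_mod_cast hn
    nlinarith [sq_nonneg (√((n : ℝ) + 1) - √(j : ℝ)), Real.sq_sqrt (Nat.cast_nonneg (α := ℝ) j)]
  rw [← exp_nat_mul, ← exp_add, exp_le_exp]
  calc c * √(j : ℝ) ≤ c * (√((n : ℝ) + 1) - (k + 1) / (2 * √((n : ℝ) + 1))) := by gcongr
    _ = _ := by push_cast; ring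

-- Erdős' induction on the divisor-sum recurrence.
theorem p_le_exp_sqrt (n : ℕ) : p n ≤ exp (√(2 / 3) * π * √n) := by
  have hc : (√(2 / 3) * π) ^ 2 = 2 / 3 * π ^ 2 := by rw [mul_pow, Real.sq_sqrt (by norm_num)]
  have hc0 : 0 < √(2 / 3) * π := by positivity
  generalize √(2 / 3) * π = c at hc hc0
  induction n using Nat.strong_induction_on with
  | _ n ih =>
    rcases n with _ | n
    · simp [p_zero]
    have hR : 0 < √((n : ℝ) + 1) := Real.sqrt_pos.2 (by positivity)
    have hsq : √((n : ℝ) + 1) ^ 2 = n + 1 := Real.sq_sqrt (by positivity)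
    push_cast
    set R := √((n : ℝ) + 1)
    have hterm : ∀ ij ∈ antidiagonal n,
        p ij.2 ≤ exp (c * R) * exp (-(c / (2 * R))) ^ (ij.1 + 1) := by
      intro ij hij
      have hn : n + 1 = ij.1 + 1 + ij.2 := by have := mem_antidiagonal.1 hij; lia
      exact (ih ij.2 (by lia)).trans (exp_mul_sqrt_le hc0.le hn)
    refine le_of_mul_le_mul_left ?_ (show (0 : ℝ) < n + 1 by positivity)
    calc (n + 1) * p (n + 1)
        = ∑ ij ∈ antidiagonal n, (σ 1 (ij.1 + 1) : ℝ) * p ij.2 := add_one_mul_p_eq_sum n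
      _ ≤ ∑ ij ∈ antidiagonal n,
          (σ 1 (ij.1 + 1) : ℝ) * (exp (c * R) * exp (-(c / (2 * R))) ^ (ij.1 + 1)) := by
        gcongr with ij hij
        exact hterm ij hij
      _ = exp (c * R) *
          ∑ ij ∈ antidiagonal n, (σ 1 (ij.1 + 1) : ℝ) * exp (-(c / (2 * R))) ^ (ij.1 + 1) := by
        rw [mul_sum]
        exact sum_congr rfl fun ij _ => mul_left_comm _ _ _
      _ ≤ exp (c * R) * (π ^ 2 / 6 * (1 / (c / (2 * R)) ^ 2)) := by
        gcongr _ * ?_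
        exact sum_antidiagonal_sigma_mul_exp_le (by positivity) n
      _ = (n + 1) * exp (c * R) := by rw [← hsq, div_pow, hc]; field_simp; norm_num

theorem exists_p_mul_pow_le {r : ℝ} (hr : 0 < r) (hr1 : r < 1) : ∃ C, ∀ n, p n * r ^ n ≤ C := by
  have hlog : 0 < -log r := neg_pos.2 (log_neg hr hr1)
  have hp := p_le_exp_sqrt
  generalize √(2 / 3) * π = c at hp
  refine ⟨exp (c ^ 2 / (4 * -log r)), fun n => ?_⟩
  calc p n * r ^ n ≤ exp (c * √n) * exp (n * log r) := by
        rw [exp_nat_mul, exp_log hr]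
        gcongr
        exact hp n
    _ ≤ exp (c ^ 2 / (4 * -log r)) := by
        rw [← exp_add, exp_le_exp, le_div_iff₀ (by positivity)]
        have hn := Real.sq_sqrt (Nat.cast_nonneg (α := ℝ) n)
        calc (c * √n + n * log r) * (4 * -log r)
            = c ^ 2 - (2 * log r * √n + c) ^ 2 := by
              linear_combination 4 * log r ^ 2 * hn
          _ ≤ c ^ 2 := sub_le_self _ (sq_nonneg _)

theorem summable_pow_mul_p (j : ℕ) (hx : 0 ≤ x) (hx1 : x < 1) :
    Summable fun n : ℕ => (n : ℝ) ^ j * p n * x ^ n := by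
  obtain ⟨r, hxr, hr1⟩ := exists_between hx1
  have hr : 0 < r := hx.trans_lt hxr
  obtain ⟨C, hC⟩ := exists_p_mul_pow_le hr hr1
  have h := (summable_pow_mul_geometric_of_norm_lt_one j (r := x / r)
    (by rw [Real.norm_of_nonneg (by positivity)]; exact (div_lt_one hr).2 hxr)).mul_left C
  refine h.of_nonneg_of_le (fun n => by have := p_pos n; positivity) fun n => ?_
  calc (n : ℝ) ^ j * p n * x ^ n = (p n * r ^ n) * ((n : ℝ) ^ j * (x / r) ^ n) := by
        rw [div_pow]; field_simp
    _ ≤ _ := by gcongr; exact hC n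

/-! ### The generating function as an exponential -/

theorem summable_norm_mul_pow_pred {c : ℕ → ℂ}
    (hc : ∀ r : ℝ, 0 ≤ r → r < 1 → Summable fun n => ‖c n‖ * r ^ n) {z : ℂ} (hz : ‖z‖ < 1) :
    Summable fun n => ‖c (n + 1) * z ^ n‖ := by
  obtain ⟨r, hzr, hr1⟩ := exists_between hz
  have hr : 0 < r := (norm_nonneg z).trans_lt hzr
  refine (((summable_nat_add_iff 1).2 (hc r hr.le hr1)).mul_right r⁻¹).of_nonneg_of_le
    (fun n => norm_nonneg _) fun n => ?_
  rw [norm_mul, norm_pow, pow_succ, mul_assoc, mul_inv_cancel_right₀ hr.ne']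
  gcongr

theorem hasDerivAt_tsum_mul_pow {c : ℕ → ℂ}
    (hc : ∀ r : ℝ, 0 ≤ r → r < 1 → Summable fun n => ‖n * c n‖ * r ^ n) {z : ℂ} (hz : ‖z‖ < 1) :
    HasDerivAt (fun w => ∑' n, c n * w ^ n) (∑' n : ℕ, ((n + 1 : ℕ) * c (n + 1)) * z ^ n) z := by
  obtain ⟨r, hzr, hr1⟩ := exists_between hz
  have hr : 0 < r := (norm_nonneg z).trans_lt hzr
  have hu : Summable fun n : ℕ => ‖n * c n‖ * r ^ (n - 1) := by
    refine (summable_nat_add_iff 1).1 ((summable_norm_mul_pow_pred hc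
      (z := r) (by rwa [Complex.norm_real, Real.norm_of_nonneg hr.le])).congr fun n => ?_)
    rw [norm_mul, norm_pow, Complex.norm_real, Real.norm_of_nonneg hr.le, Nat.add_sub_cancel]
  have hbound (n : ℕ) (w : ℂ) (hw : w ∈ Metric.ball (0 : ℂ) r) :
      ‖c n * (n * w ^ (n - 1))‖ ≤ ‖n * c n‖ * r ^ (n - 1) := by
    have hw' : ‖w‖ ≤ r := (mem_ball_zero_iff.1 hw).le
    rw [← mul_assoc, mul_comm (c n), norm_mul, norm_pow]
    gcongr
  have hz' : z ∈ Metric.ball (0 : ℂ) r := mem_ball_zero_iff.2 hzr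
  have hderiv := hasDerivAt_tsum_of_isPreconnected (g := fun n w => c n * w ^ n) hu
    Metric.isOpen_ball (convex_ball (0 : ℂ) r).isPreconnected
    (fun n y _ => (hasDerivAt_pow n y).const_mul (c n)) hbound (Metric.mem_ball_self hr)
    (summable_of_ne_finset_zero (s := {0}) fun n hn => by simp [Finset.mem_singleton.not.1 hn]) hz'
  refine hderiv.congr_deriv ?_
  rw [(Summable.of_norm_bounded hu fun n => hbound n z hz').tsum_eq_zero_add]
  simp only [Nat.cast_zero, zero_mul, mul_zero, zero_add, Nat.add_sub_cancel]
  exact tsum_congr fun n => by ring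

theorem hasDerivAt_tsum_div_mul_pow {c : ℕ → ℂ}
    (hc : ∀ r : ℝ, 0 ≤ r → r < 1 → Summable fun n => ‖c n‖ * r ^ n) {z : ℂ} (hz : ‖z‖ < 1) :
    HasDerivAt (fun w => ∑' n : ℕ, c n / n * w ^ n) (∑' n, c (n + 1) * z ^ n) z := by
  refine (hasDerivAt_tsum_mul_pow (c := fun n => c n / n) (fun r hr hr1 => ?_) hz).congr_deriv
    (tsum_congr fun n => by rw [mul_div_cancel₀ _ (Nat.cast_ne_zero.2 n.succ_ne_zero)])
  refine (hc r hr hr1).of_nonneg_of_le (fun n => by positivity) fun n => ?_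
  rcases eq_or_ne n 0 with rfl | hn
  · simp
  · rw [mul_div_cancel₀ _ (Nat.cast_ne_zero.2 hn)]

theorem hasDerivAt_tsum_of_recurrence {a c : ℕ → ℂ}
    (ha : ∀ j : ℕ, ∀ r : ℝ, 0 ≤ r → r < 1 → Summable fun n => ‖n ^ j * a n‖ * r ^ n)
    (hc : ∀ r : ℝ, 0 ≤ r → r < 1 → Summable fun n => ‖c n‖ * r ^ n)
    (hrec : ∀ n, (n + 1 : ℕ) * a (n + 1) = ∑ ij ∈ antidiagonal n, c (ij.1 + 1) * a ij.2)
    {z : ℂ} (hz : ‖z‖ < 1) :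
    HasDerivAt (fun w => ∑' n, a n * w ^ n)
      ((∑' n, c (n + 1) * z ^ n) * ∑' n, a n * z ^ n) z := by
  refine (hasDerivAt_tsum_mul_pow (by simpa using ha 1) hz).congr_deriv ?_
  have ha0 : Summable fun n => ‖a n * z ^ n‖ := by
    simpa [norm_mul] using ha 0 ‖z‖ (norm_nonneg z) hz
  rw [tsum_mul_tsum_eq_tsum_sum_antidiagonal_of_summable_norm
    (summable_norm_mul_pow_pred hc hz) ha0]
  refine tsum_congr fun n => ?_
  rw [hrec, sum_mul]
  refine sum_congr rfl fun ij hij => ?_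
  rw [← mem_antidiagonal.1 hij, pow_add]
  ring

theorem eq_mul_exp_of_hasDerivAt {s : Set ℂ} (hs : IsOpen s) (hconv : Convex ℝ s)
    {f g h : ℂ → ℂ} (hf : ∀ w ∈ s, HasDerivAt f (g w * f w) w)
    (hh : ∀ w ∈ s, HasDerivAt h (g w) w) {w z : ℂ} (hw : w ∈ s) (hz : z ∈ s) :
    f z = f w * Complex.exp (h z - h w) := by
  have hderiv : ∀ y ∈ s, HasDerivAt (fun y => f y * Complex.exp (-h y)) 0 y := fun y hy =>
    ((hf y hy).mul (hh y hy).neg.cexp).congr_deriv (by ring)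
  have hconst := hconv.is_const_of_fderivWithin_eq_zero (𝕜 := ℂ)
    (fun y hy => (hderiv y hy).differentiableAt.differentiableWithinAt)
    (fun y hy => by
      rw [fderivWithin_of_isOpen hs hy]
      simpa using (hderiv y hy).hasFDerivAt.fderiv) hz hw
  rw [sub_eq_neg_add, Complex.exp_add, ← mul_assoc, ← hconst, mul_assoc, ← Complex.exp_add,
    neg_add_cancel, Complex.exp_zero, mul_one]

theorem tsum_mul_pow_eq_exp_of_recurrence {a c : ℕ → ℂ}
    (ha : ∀ j : ℕ, ∀ r : ℝ, 0 ≤ r → r < 1 → Summable fun n => ‖n ^ j * a n‖ * r ^ n)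
    (hc : ∀ r : ℝ, 0 ≤ r → r < 1 → Summable fun n => ‖c n‖ * r ^ n)
    (hrec : ∀ n, (n + 1 : ℕ) * a (n + 1) = ∑ ij ∈ antidiagonal n, c (ij.1 + 1) * a ij.2)
    {z : ℂ} (hz : ‖z‖ < 1) :
    ∑' n, a n * z ^ n = a 0 * Complex.exp (∑' n : ℕ, c n / n * z ^ n) := by
  have h := eq_mul_exp_of_hasDerivAt Metric.isOpen_ball (convex_ball (0 : ℂ) 1)
    (fun w hw => hasDerivAt_tsum_of_recurrence ha hc hrec (mem_ball_zero_iff.1 hw))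
    (fun w hw => hasDerivAt_tsum_div_mul_pow hc (mem_ball_zero_iff.1 hw))
    (Metric.mem_ball_self one_pos) (mem_ball_zero_iff.2 hz)
  have hzero (f : ℕ → ℂ) : ∑' n, f n * 0 ^ n = f 0 := by
    rw [tsum_eq_single 0 fun n hn => by simp [hn], pow_zero, mul_one]
  rw [hzero, hzero, CharP.cast_eq_zero, div_zero, sub_zero] at h
  exact h

theorem tsum_p_mul_pow_eq_exp {z : ℂ} (hz : ‖z‖ < 1) :
    ∑' n, (p n : ℂ) * z ^ n = Complex.exp (∑' k : ℕ, (σ 1 k : ℂ) / k * z ^ k) := by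
  rw [tsum_mul_pow_eq_exp_of_recurrence (c := fun k => (σ 1 k : ℂ)) (fun j r hr hr1 => ?_)
    (fun r hr hr1 => ?_) (fun n => ?_) hz, p_zero, Complex.ofReal_one, one_mul]
  · refine (summable_pow_mul_p j hr hr1).congr fun n => ?_
    rw [norm_mul, norm_pow, Complex.norm_natCast, Complex.norm_real,
      Real.norm_of_nonneg (p_pos n).le]
  · simpa using summable_sigmaMoment 0 hr hr1
  · exact_mod_cast congrArg (fun t : ℝ => (t : ℂ)) (add_one_mul_p_eq_sum n)

/-! ### Cauchy's formula for the coefficients -/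

/-- The logarithm of the generating function of `p` at `x`. -/
noncomputable def logGen (x : ℝ) : ℝ := ∑' k : ℕ, (σ 1 k : ℝ) / k * x ^ k

/-- The logarithm of the ratio between the generating function of `p` at `x` and its absolute value
at `x * exp (θ * I)`. -/
noncomputable def decay (x θ : ℝ) : ℝ := ∑' k : ℕ, (σ 1 k : ℝ) / k * x ^ k * (1 - cos (k * θ))

/-- The argument of the generating function of `p` at `x * exp (θ * I)`. -/
noncomputable def phase (x θ : ℝ) : ℝ := ∑' k : ℕ, (σ 1 k : ℝ) / k * x ^ k * sin (k * θ)

theorem summable_sigma_div (hx : 0 ≤ x) (hx1 : x < 1) :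
    Summable fun k : ℕ => (σ 1 k : ℝ) / k * x ^ k := by
  refine (summable_sigmaMoment 0 hx hx1).of_nonneg_of_le (fun k => by positivity) fun k => ?_
  rw [pow_zero, one_mul]
  gcongr
  rcases eq_or_ne k 0 with rfl | hk
  · simp
  · exact div_le_self (by positivity) (Nat.one_le_cast.2 (Nat.one_le_iff_ne_zero.2 hk))

theorem abs_one_sub_cos_le (t : ℝ) : |1 - cos t| ≤ 2 :=
  abs_le.2 ⟨by linarith [cos_le_one t], by linarith [neg_one_le_cos t]⟩

theorem norm_sigma_div_mul_pow_mul_le (hx : 0 ≤ x) {y B : ℝ} (hy : |y| ≤ B) (k : ℕ) :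
    ‖(σ 1 k : ℝ) / k * x ^ k * y‖ ≤ (σ 1 k : ℝ) / k * x ^ k * B := by
  rw [norm_mul, Real.norm_of_nonneg (by positivity : (0 : ℝ) ≤ (σ 1 k : ℝ) / k * x ^ k)]
  gcongr
  exact hy

theorem summable_decay (hx : 0 ≤ x) (hx1 : x < 1) (θ : ℝ) :
    Summable fun k : ℕ => (σ 1 k : ℝ) / k * x ^ k * (1 - cos (k * θ)) :=
  .of_norm_bounded ((summable_sigma_div hx hx1).mul_right 2) fun k =>
    norm_sigma_div_mul_pow_mul_le hx (abs_one_sub_cos_le _) k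

theorem summable_phase (hx : 0 ≤ x) (hx1 : x < 1) (θ : ℝ) :
    Summable fun k : ℕ => (σ 1 k : ℝ) / k * x ^ k * sin (k * θ) :=
  .of_norm_bounded ((summable_sigma_div hx hx1).mul_right 1) fun k =>
    norm_sigma_div_mul_pow_mul_le hx (abs_sin_le_one _) k

theorem continuous_decay (hx : 0 ≤ x) (hx1 : x < 1) : Continuous (decay x) :=
  continuous_tsum (fun k => by fun_prop) ((summable_sigma_div hx hx1).mul_right 2) fun k _ =>
    norm_sigma_div_mul_pow_mul_le hx (abs_one_sub_cos_le _) k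

theorem continuous_phase (hx : 0 ≤ x) (hx1 : x < 1) : Continuous (phase x) :=
  continuous_tsum (fun k => by fun_prop) ((summable_sigma_div hx hx1).mul_right 1) fun k _ =>
    norm_sigma_div_mul_pow_mul_le hx (abs_sin_le_one _) k

theorem norm_ofReal_mul_exp_mul_I (hx : 0 ≤ x) (θ : ℝ) :
    ‖(x : ℂ) * Complex.exp (θ * Complex.I)‖ = x := by
  rw [norm_mul, Complex.norm_exp_ofReal_mul_I, mul_one, Complex.norm_real, Real.norm_of_nonneg hx]

theorem ofReal_mul_exp_mul_I_pow (x θ : ℝ) (k : ℕ) :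
    ((x : ℂ) * Complex.exp (θ * Complex.I)) ^ k =
      (x ^ k * cos (k * θ) : ℝ) + (x ^ k * sin (k * θ) : ℝ) * Complex.I := by
  rw [mul_pow, ← Complex.exp_nat_mul, show (k : ℂ) * (θ * Complex.I) =
    ((k * θ : ℝ) : ℂ) * Complex.I by push_cast; ring, Complex.exp_mul_I]
  push_cast
  ring

theorem tsum_sigma_div_mul_pow_eq (hx : 0 ≤ x) (hx1 : x < 1) (θ : ℝ) :
    ∑' k : ℕ, (σ 1 k : ℂ) / k * (x * Complex.exp (θ * Complex.I)) ^ k =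
      (logGen x - decay x θ : ℝ) + (phase x θ : ℝ) * Complex.I := by
  have hre := Complex.hasSum_ofReal.2
    ((summable_sigma_div hx hx1).hasSum.sub (summable_decay hx hx1 θ).hasSum)
  have him := (Complex.hasSum_ofReal.2 (summable_phase hx hx1 θ).hasSum).mul_right Complex.I
  refine ((hre.add him).congr_fun fun k => ?_).tsum_eq
  rw [ofReal_mul_exp_mul_I_pow]
  push_cast
  ring

theorem hasSum_p_mul_cos (hx : 0 ≤ x) (hx1 : x < 1) (ν θ : ℝ) :
    HasSum (fun m : ℕ => p m * x ^ m * cos ((m - ν) * θ))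
      (exp (logGen x - decay x θ) * cos (phase x θ - ν * θ)) := by
  have hz : ‖(x : ℂ) * Complex.exp (θ * Complex.I)‖ < 1 := by rwa [norm_ofReal_mul_exp_mul_I hx]
  have hs : Summable fun m : ℕ => (p m : ℂ) * (x * Complex.exp (θ * Complex.I)) ^ m := by
    refine .of_norm ((summable_pow_mul_p 0 hx hx1).congr fun m => ?_)
    rw [norm_mul, norm_pow, norm_ofReal_mul_exp_mul_I hx, Complex.norm_real,
      Real.norm_of_nonneg (p_pos m).le, pow_zero, one_mul]
  have hsum := hs.hasSum
  rw [tsum_p_mul_pow_eq_exp hz, tsum_sigma_div_mul_pow_eq hx hx1] at hsum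
  have hrot := Complex.hasSum_re (hsum.mul_right (Complex.exp ((-(ν * θ) : ℝ) * Complex.I)))
  rw [← Complex.exp_add, add_assoc, ← add_mul, ← Complex.ofReal_add, Complex.exp_add,
    ← Complex.ofReal_exp, Complex.re_ofReal_mul, Complex.exp_ofReal_mul_I_re,
    ← sub_eq_add_neg] at hrot
  refine hrot.congr_fun fun m => ?_
  rw [mul_pow, ← Complex.exp_nat_mul, mul_assoc, mul_assoc, mul_assoc, ← Complex.exp_add,
    show (m : ℂ) * (θ * Complex.I) + ((-(ν * θ) : ℝ) : ℂ) * Complex.I =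
    (((m - ν) * θ : ℝ) : ℂ) * Complex.I by push_cast; ring, ← Complex.ofReal_pow,
    Complex.re_ofReal_mul, Complex.re_ofReal_mul, Complex.exp_ofReal_mul_I_re]

theorem integral_cos_int_mul (j : ℤ) :
    ∫ θ in (0 : ℝ)..π, cos (j * θ) = if j = 0 then π else 0 := by
  split_ifs with hj
  · simp [hj]
  · have hj' : (j : ℝ) ≠ 0 := by exact_mod_cast hj
    rw [intervalIntegral.integral_comp_mul_left (fun t => cos t) hj']
    simp [Real.sin_int_mul_pi]

/-- For `ν = n`, Cauchy's integral for the `n`-th coefficient of the generating function of `p` on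
the circle of radius `x`, normalised by the value of the generating function at `x` and folded to
`[0, π]`. A real `ν` makes `ν - 1` free of truncation. -/
noncomputable def coeffIntegral (x ν : ℝ) : ℝ :=
  ∫ θ in (0 : ℝ)..π, exp (-decay x θ) * cos (phase x θ - ν * θ)

theorem exp_logGen_mul_coeffIntegral (hx : 0 ≤ x) (hx1 : x < 1) (n : ℕ) :
    exp (logGen x) * coeffIntegral x n = π * (p n * x ^ n) := by
  have hp : Summable fun m => p m * x ^ m := by simpa using summable_pow_mul_p 0 hx hx1
  have hsum := intervalIntegral.hasSum_integral_of_dominated_convergence (μ := volume)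
    (a := 0) (b := π) (F := fun (m : ℕ) (θ : ℝ) => p m * x ^ m * cos ((m - n) * θ))
    (f := fun θ => exp (logGen x - decay x θ) * cos (phase x θ - n * θ))
    (fun m _ => p m * x ^ m)
    (fun m => (by fun_prop : Continuous _).aestronglyMeasurable)
    (fun m => .of_forall fun θ _ => by
      have := p_pos m
      rw [norm_mul, Real.norm_of_nonneg (by positivity)]
      exact mul_le_of_le_one_right (by positivity) (abs_cos_le_one _))
    (.of_forall fun θ _ => hp) intervalIntegrable_const
    (.of_forall fun θ _ => hasSum_p_mul_cos hx hx1 n θ)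
  have horth (m : ℕ) : ∫ θ in (0 : ℝ)..π, p m * x ^ m * cos ((m - n) * θ) =
      if m = n then π * (p n * x ^ n) else 0 := by
    have hcos := integral_cos_int_mul (m - n)
    push_cast at hcos
    rw [intervalIntegral.integral_const_mul, hcos]
    rcases eq_or_ne m n with rfl | hmn
    · simp [mul_comm]
    · rw [if_neg (by lia), if_neg hmn, mul_zero]
  simp only [horth] at hsum
  rw [coeffIntegral, ← intervalIntegral.integral_const_mul, ← hsum.unique (hasSum_ite_eq n _)]
  refine intervalIntegral.integral_congr fun θ _ => ?_
  rw [← mul_assoc, ← exp_add, ← sub_eq_add_neg]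

theorem continuous_coeffIntegrand (hx : 0 ≤ x) (hx1 : x < 1) (ν : ℝ) :
    Continuous fun θ => exp (-decay x θ) * cos (phase x θ - ν * θ) := by
  have := continuous_decay hx hx1
  have := continuous_phase hx hx1
  fun_prop

theorem abs_coeffIntegral_add_sub_le (hx : 0 ≤ x) (hx1 : x < 1) (ν : ℝ) :
    |coeffIntegral x (ν + 1) + coeffIntegral x (ν - 1) - 2 * coeffIntegral x ν| ≤
      ∫ θ in (0 : ℝ)..π, exp (-decay x θ) * (2 * (1 - cos θ)) := by
  have hint (μ : ℝ) := (continuous_coeffIntegrand hx hx1 μ).intervalIntegrable (μ := volume) 0 π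
  have hdecay := continuous_decay hx hx1
  rw [coeffIntegral, coeffIntegral, coeffIntegral, ← intervalIntegral.integral_const_mul,
    ← intervalIntegral.integral_add (hint _) (hint _),
    ← intervalIntegral.integral_sub ((hint _).add (hint _)) ((hint _).const_mul 2),
    ← Real.norm_eq_abs]
  refine norm_integral_le_of_norm_le pi_pos.le (.of_forall fun θ _ => ?_)
    ((by fun_prop : Continuous _).intervalIntegrable _ _)
  have hdiff : exp (-decay x θ) * cos (phase x θ - (ν + 1) * θ) +
      exp (-decay x θ) * cos (phase x θ - (ν - 1) * θ) -
      2 * (exp (-decay x θ) * cos (phase x θ - ν * θ)) =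
      exp (-decay x θ) * (-cos (phase x θ - ν * θ) * (2 * (1 - cos θ))) := by
    rw [show phase x θ - (ν + 1) * θ = phase x θ - ν * θ - θ by ring,
      show phase x θ - (ν - 1) * θ = phase x θ - ν * θ + θ by ring, cos_add, cos_sub]
    ring
  have hcos : 0 ≤ 2 * (1 - cos θ) := by linarith [cos_le_one θ]
  rw [hdiff, norm_mul, norm_mul, norm_neg, Real.norm_of_nonneg (exp_pos _).le,
    Real.norm_of_nonneg hcos]
  exact mul_le_mul_of_nonneg_left (mul_le_of_le_one_left hcos (abs_cos_le_one _)) (exp_pos _).le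

theorem abs_coeffIntegral_sub_le (hx : 0 ≤ x) (hx1 : x < 1) (ν : ℝ) :
    |coeffIntegral x (ν + 1) - coeffIntegral x (ν - 1)| ≤
      ∫ θ in (0 : ℝ)..π, exp (-decay x θ) * (2 * sin θ) := by
  have hint (μ : ℝ) := (continuous_coeffIntegrand hx hx1 μ).intervalIntegrable (μ := volume) 0 π
  have hdecay := continuous_decay hx hx1
  rw [coeffIntegral, coeffIntegral, ← intervalIntegral.integral_sub (hint _) (hint _),
    ← Real.norm_eq_abs]
  refine norm_integral_le_of_norm_le pi_pos.le (.of_forall fun θ hθ => ?_)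
    ((by fun_prop : Continuous _).intervalIntegrable _ _)
  have hdiff : exp (-decay x θ) * cos (phase x θ - (ν + 1) * θ) -
      exp (-decay x θ) * cos (phase x θ - (ν - 1) * θ) =
      exp (-decay x θ) * (sin (phase x θ - ν * θ) * (2 * sin θ)) := by
    rw [show phase x θ - (ν + 1) * θ = phase x θ - ν * θ - θ by ring,
      show phase x θ - (ν - 1) * θ = phase x θ - ν * θ + θ by ring, cos_add, cos_sub]
    ring
  have hsin : 0 ≤ 2 * sin θ :=
    mul_nonneg zero_le_two (sin_nonneg_of_mem_Icc (Set.Ioc_subset_Icc_self hθ))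
  rw [hdiff, norm_mul, norm_mul, Real.norm_of_nonneg (exp_pos _).le, Real.norm_of_nonneg hsin]
  exact mul_le_mul_of_nonneg_left (mul_le_of_le_one_left hsin (abs_sin_le_one _)) (exp_pos _).le

/-! ### Bounds for the decay and the phase -/

theorem exp_neg_one_le : exp (-1) ≤ 0.3679 := by
  rw [exp_neg, inv_le_comm₀ (exp_pos 1) (by norm_num)]
  exact le_trans (by norm_num) exp_one_gt_d9.le

theorem sigmaMoment_one_le {a : ℝ} (ha : 0 < a) (ha1 : a ≤ 1) :
    sigmaMoment 1 (1 - a) ≤ 4.1 / a ^ 3 := by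
  have h := sigmaMoment_one_sub_le (c := a / 3) (by positivity) 1 (by push_cast; linarith)
  rw [show 1 - (((1 : ℕ) : ℝ) + 2) * (a / 3) = 1 - a by push_cast; ring] at h
  calc sigmaMoment 1 (1 - a) ≤ π ^ 2 / 6 * (exp (-1) ^ 1 / (4 * (a / 3) ^ (1 + 2))) := h
    _ ≤ 3.1416 ^ 2 / 6 * (0.3679 ^ 1 / (4 * (a / 3) ^ (1 + 2))) := by
      gcongr
      · exact pi_lt_d4.le
      · exact exp_neg_one_le
    _ = 3.1416 ^ 2 / 6 * (0.3679 * 27 / 4) / a ^ 3 := by rw [div_pow]; field_simp; norm_num; ring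
    _ ≤ 4.1 / a ^ 3 := by gcongr; norm_num

theorem sigmaMoment_two_le {a : ℝ} (ha : 0 < a) (ha1 : a ≤ 1) :
    sigmaMoment 2 (1 - a) ≤ 14.4 / a ^ 4 := by
  have h := sigmaMoment_one_sub_le (c := a / 4) (by positivity) 2 (by push_cast; linarith)
  rw [show 1 - (((2 : ℕ) : ℝ) + 2) * (a / 4) = 1 - a by push_cast; ring] at h
  calc sigmaMoment 2 (1 - a) ≤ π ^ 2 / 6 * (exp (-1) ^ 2 / (4 * (a / 4) ^ (2 + 2))) := h
    _ ≤ 3.1416 ^ 2 / 6 * (0.3679 ^ 2 / (4 * (a / 4) ^ (2 + 2))) := by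
      gcongr
      · exact pi_lt_d4.le
      · exact exp_neg_one_le
    _ = 3.1416 ^ 2 / 6 * (0.3679 ^ 2 * 64) / a ^ 4 := by rw [div_pow]; field_simp; norm_num; ring
    _ ≤ 14.4 / a ^ 4 := by gcongr; norm_num

theorem decay_le (hx : 0 ≤ x) (hx1 : x < 1) (θ : ℝ) :
    decay x θ ≤ sigmaMoment 1 x * (θ ^ 2 / 2) := by
  rw [sigmaMoment, ← tsum_mul_right]
  refine (summable_decay hx hx1 θ).tsum_le_tsum (fun k => ?_)
    ((summable_sigmaMoment 1 hx hx1).mul_right _)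
  rcases eq_or_ne k 0 with rfl | hk
  · simp
  have hk' : (k : ℝ) ≠ 0 := Nat.cast_ne_zero.2 hk
  calc (σ 1 k : ℝ) / k * x ^ k * (1 - cos (k * θ))
      ≤ (σ 1 k : ℝ) / k * x ^ k * ((k * θ) ^ 2 / 2) := by
        gcongr
        linarith [one_sub_sq_div_two_le_cos (x := k * θ)]
    _ = (k : ℝ) ^ 1 * σ 1 k * x ^ k * (θ ^ 2 / 2) := by field_simp

theorem abs_sin_sub_self_le {t : ℝ} (ht : 0 ≤ t) : |sin t - t| ≤ t ^ 3 / 6 :=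
  abs_le.2 ⟨by linarith [sin_ge_sub_cube ht],
    by linarith [sin_le ht, show 0 ≤ t ^ 3 by positivity]⟩

theorem abs_phase_sub_le (hx : 0 ≤ x) (hx1 : x < 1) {θ : ℝ} (hθ : 0 ≤ θ) :
    |phase x θ - sigmaMoment 0 x * θ| ≤ sigmaMoment 2 x * (θ ^ 3 / 6) := by
  have hdiff := (summable_phase hx hx1 θ).hasSum.sub
    ((summable_sigmaMoment 0 hx hx1).hasSum.mul_right θ)
  rw [phase, sigmaMoment, ← hdiff.tsum_eq, ← Real.norm_eq_abs]
  refine tsum_of_norm_bounded ((summable_sigmaMoment 2 hx hx1).hasSum.mul_right _) fun k => ?_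
  rcases eq_or_ne k 0 with rfl | hk
  · simp
  have hk' : (k : ℝ) ≠ 0 := Nat.cast_ne_zero.2 hk
  calc ‖(σ 1 k : ℝ) / k * x ^ k * sin (k * θ) - (k : ℝ) ^ 0 * σ 1 k * x ^ k * θ‖
      = ‖(σ 1 k : ℝ) / k * x ^ k * (sin (k * θ) - k * θ)‖ := by congr 1; field_simp
    _ ≤ (σ 1 k : ℝ) / k * x ^ k * ((k * θ) ^ 3 / 6) :=
        norm_sigma_div_mul_pow_mul_le hx (abs_sin_sub_self_le (by positivity)) k
    _ = (k : ℝ) ^ 2 * σ 1 k * x ^ k * (θ ^ 3 / 6) := by field_simp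

/-- The value of `∑ xᵏ (1 - cos (k θ))` in terms of `u = 1 - cos θ`; as `k ≤ σ₁(k)` it is a lower
bound for the decay. -/
noncomputable def geomDecay (x u : ℝ) : ℝ :=
  x * (1 + x) * u / ((1 - x) * ((1 - x) ^ 2 + 2 * x * u))

theorem re_inv_one_sub_mul_exp (x θ : ℝ) :
    ((1 - (x : ℂ) * Complex.exp (θ * Complex.I))⁻¹).re =
      (1 - x * cos θ) / ((1 - x) ^ 2 + 2 * x * (1 - cos θ)) := by
  rw [Complex.inv_re, Complex.normSq_apply, Complex.sub_re, Complex.sub_im, Complex.re_ofReal_mul,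
    Complex.exp_ofReal_mul_I_re, Complex.im_ofReal_mul, Complex.exp_ofReal_mul_I_im,
    Complex.one_re, Complex.one_im]
  congr 1
  linear_combination x ^ 2 * sin_sq_add_cos_sq θ

theorem hasSum_geomDecay (hx : 0 ≤ x) (hx1 : x < 1) (θ : ℝ) :
    HasSum (fun k : ℕ => x ^ k * (1 - cos (k * θ))) (geomDecay x (1 - cos θ)) := by
  have hcos := Complex.hasSum_re (hasSum_geometric_of_norm_lt_one
    (by rwa [norm_ofReal_mul_exp_mul_I hx] : ‖(x : ℂ) * Complex.exp (θ * Complex.I)‖ < 1))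
  rw [re_inv_one_sub_mul_exp] at hcos
  have hx' : 0 < 1 - x := sub_pos.2 hx1
  have hu : 0 ≤ 1 - cos θ := sub_nonneg.2 (cos_le_one θ)
  have hden : 0 < (1 - x) ^ 2 + 2 * x * (1 - cos θ) := by positivity
  have hval : (1 - x)⁻¹ - (1 - x * cos θ) / ((1 - x) ^ 2 + 2 * x * (1 - cos θ)) =
      geomDecay x (1 - cos θ) := by
    rw [geomDecay, inv_eq_one_div, div_sub_div _ _ hx'.ne' hden.ne']
    congr 1
    ring
  rw [← hval]
  refine ((hasSum_geometric_of_lt_one hx hx1).sub hcos).congr_fun fun k => ?_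
  rw [ofReal_mul_exp_mul_I_pow, Complex.add_re, Complex.ofReal_re, Complex.re_ofReal_mul,
    Complex.I_re]
  ring

theorem le_sigma_one (k : ℕ) : k ≤ σ 1 k := by
  rcases eq_or_ne k 0 with rfl | hk
  · simp
  · rw [ArithmeticFunction.sigma_one_apply]
    exact single_le_sum (f := fun d => d) (fun _ _ => Nat.zero_le _) (Nat.mem_divisors_self k hk)

theorem geomDecay_le_decay (hx : 0 ≤ x) (hx1 : x < 1) (θ : ℝ) :
    geomDecay x (1 - cos θ) ≤ decay x θ := by
  refine hasSum_le (fun k => ?_) (hasSum_geomDecay hx hx1 θ) (summable_decay hx hx1 θ).hasSum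
  rcases Nat.eq_zero_or_pos k with rfl | hk
  · simp
  rw [mul_assoc]
  refine le_mul_of_one_le_left (mul_nonneg (by positivity) (sub_nonneg.2 (cos_le_one _))) ?_
  rw [one_le_div (Nat.cast_pos.2 hk)]
  exact_mod_cast le_sigma_one k

theorem geomDecay_mono (hx : 0 ≤ x) (hx1 : x < 1) {u v : ℝ} (hu : 0 ≤ u) (huv : u ≤ v) :
    geomDecay x u ≤ geomDecay x v := by
  have : 0 < 1 - x := sub_pos.2 hx1
  have hv : 0 ≤ v := hu.trans huv
  rw [geomDecay, geomDecay, div_le_div_iff₀ (by positivity) (by positivity), ← sub_nonneg]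
  calc 0 ≤ x * (1 + x) * (1 - x) ^ 3 * (v - u) := by
        have := sub_nonneg.2 huv
        positivity
    _ = _ := by ring

theorem mul_sq_le_one_sub_cos {θ : ℝ} (hθ0 : 0 ≤ θ) (hθ : θ ≤ 0.04) :
    0.4999 * θ ^ 2 ≤ 1 - cos θ := by
  have h := (abs_le.1 (cos_bound (x := θ) (by rw [abs_of_nonneg hθ0]; linarith))).2
  rw [abs_of_nonneg hθ0] at h
  have hsq : θ ^ 2 ≤ 0.04 ^ 2 := by gcongr
  nlinarith [sq_nonneg θ]

theorem div_le_geomDecay {a θ : ℝ} (ha : 0 < a) (ha1 : a ≤ 1 / 50) (hθ0 : 0 ≤ θ)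
    (hθ : θ ≤ 2 * a) :
    0.97 * θ ^ 2 / (a * (a ^ 2 + θ ^ 2)) ≤ geomDecay (1 - a) (1 - cos θ) := by
  have hx : 0 ≤ 1 - a := by linarith
  calc 0.97 * θ ^ 2 / (a * (a ^ 2 + θ ^ 2)) ≤ geomDecay (1 - a) (0.4999 * θ ^ 2) := by
        have hnum : 0.97 * θ ^ 2 ≤ (1 - a) * (1 + (1 - a)) * (0.4999 * θ ^ 2) := by
          nlinarith [mul_nonneg (sub_nonneg.2 ha1) (sq_nonneg θ), sq_nonneg (a * θ)]
        have hden : a ^ 2 + 2 * (1 - a) * (0.4999 * θ ^ 2) ≤ a ^ 2 + θ ^ 2 := by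
          nlinarith [mul_nonneg ha.le (sq_nonneg θ), sq_nonneg θ]
        rw [geomDecay, sub_sub_cancel]
        gcongr
    _ ≤ _ := geomDecay_mono hx (by linarith) (by positivity)
        (mul_sq_le_one_sub_cos hθ0 (by linarith))

theorem exp_neg_decay_le {a θ : ℝ} (ha : 0 < a) (ha1 : a ≤ 1 / 50) (hθ0 : 0 ≤ θ) (hθ : θ ≤ π) :
    exp (-decay (1 - a) θ) ≤ exp (-(1 / (2 * a ^ 3)) * θ ^ 2) + exp (-(0.46 / a)) := by
  have hx : 0 ≤ 1 - a := by linarith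
  have hx1 : 1 - a < 1 := by linarith
  have hdecay := geomDecay_le_decay hx hx1 θ
  rcases le_total θ (0.95 * a) with hnear | hfar
  · refine le_add_of_le_of_nonneg (exp_le_exp.2 ?_) (exp_pos _).le
    rw [neg_mul, neg_le_neg_iff]
    refine le_trans ?_ ((div_le_geomDecay ha ha1 hθ0 (by linarith)).trans hdecay)
    have hsq : θ ^ 2 ≤ 0.9025 * a ^ 2 := by nlinarith
    rw [one_div_mul_eq_div, div_le_div_iff₀ (by positivity) (by positivity)]
    nlinarith [mul_nonneg (mul_nonneg (sq_nonneg θ) ha.le) (sub_nonneg.2 hsq),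
      mul_nonneg (mul_nonneg (sq_nonneg θ) ha.le) (sq_nonneg a)]
  · refine le_add_of_nonneg_of_le (exp_pos _).le (exp_le_exp.2 (neg_le_neg ?_))
    have hcos : cos θ ≤ cos (0.95 * a) := cos_le_cos_of_nonneg_of_le_pi (by positivity) hθ hfar
    calc 0.46 / a ≤ 0.97 * (0.95 * a) ^ 2 / (a * (a ^ 2 + (0.95 * a) ^ 2)) := by
          rw [div_le_div_iff₀ ha (by positivity)]
          nlinarith [pow_pos ha 3]
      _ ≤ geomDecay (1 - a) (1 - cos (0.95 * a)) :=
          div_le_geomDecay ha ha1 (by positivity) (by linarith)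
      _ ≤ geomDecay (1 - a) (1 - cos θ) :=
          geomDecay_mono hx hx1 (sub_nonneg.2 (cos_le_one _)) (by linarith)
      _ ≤ decay (1 - a) θ := hdecay

/-! ### Gaussian integrals -/

theorem integral_mul_exp_neg_mul_sq {b : ℝ} (hb : b ≠ 0) (A B : ℝ) :
    ∫ θ in A..B, θ * exp (-b * θ ^ 2) = (exp (-b * A ^ 2) - exp (-b * B ^ 2)) / (2 * b) := by
  have hderiv : ∀ θ ∈ Set.uIcc A B,
      HasDerivAt (fun t => -exp (-b * t ^ 2) / (2 * b)) (θ * exp (-b * θ ^ 2)) θ := fun θ _ => by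
    refine ((((hasDerivAt_pow 2 θ).const_mul (-b)).exp.neg).div_const (2 * b)).congr_deriv ?_
    field_simp
    simp [mul_comm]
  rw [integral_eq_sub_of_hasDerivAt hderiv
    ((by fun_prop : Continuous _).intervalIntegrable _ _)]
  ring

theorem integral_exp_neg_mul_sq_le {b T B : ℝ} (hb : 0 < b) (hT : 0 < T) (hB : T ≤ B) :
    ∫ θ in T..B, exp (-b * θ ^ 2) ≤ exp (-b * T ^ 2) / (2 * b * T) := by
  calc ∫ θ in T..B, exp (-b * θ ^ 2) ≤ ∫ θ in T..B, T⁻¹ * (θ * exp (-b * θ ^ 2)) := by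
        refine integral_mono_on hB ((by fun_prop : Continuous _).intervalIntegrable _ _)
          ((by fun_prop : Continuous _).intervalIntegrable _ _) fun θ hθ => ?_
        rw [← mul_assoc]
        refine le_mul_of_one_le_left (exp_pos _).le ?_
        rw [inv_mul_eq_div, one_le_div hT]
        exact hθ.1
    _ = T⁻¹ * ((exp (-b * T ^ 2) - exp (-b * B ^ 2)) / (2 * b)) := by
        rw [intervalIntegral.integral_const_mul, integral_mul_exp_neg_mul_sq hb.ne']
    _ ≤ T⁻¹ * (exp (-b * T ^ 2) / (2 * b)) := by
        gcongr
        exact sub_le_self _ (exp_pos _).le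
    _ = _ := by field_simp

theorem integral_sq_mul_exp_neg_mul_sq_le {b B : ℝ} (hb : 0 < b) (hB : 0 ≤ B) :
    ∫ θ in (0 : ℝ)..B, θ ^ 2 * exp (-b * θ ^ 2) ≤ √(π / b) / 2 / (2 * b) := by
  have hderiv : ∀ θ ∈ Set.uIcc 0 B, HasDerivAt (fun t => -(t * exp (-b * t ^ 2)) / (2 * b))
      (θ ^ 2 * exp (-b * θ ^ 2) - exp (-b * θ ^ 2) / (2 * b)) θ := fun θ _ => by
    refine ((((hasDerivAt_id θ).mul ((hasDerivAt_pow 2 θ).const_mul (-b)).exp).neg).div_const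
      (2 * b)).congr_deriv ?_
    field_simp
    simp
    ring
  have hparts := integral_eq_sub_of_hasDerivAt hderiv
    ((by fun_prop : Continuous _).intervalIntegrable _ _)
  rw [intervalIntegral.integral_sub ((by fun_prop : Continuous _).intervalIntegrable _ _)
    ((by fun_prop : Continuous _).intervalIntegrable _ _), intervalIntegral.integral_div,
    sub_eq_iff_eq_add] at hparts
  have hgauss : ∫ θ in (0 : ℝ)..B, exp (-b * θ ^ 2) ≤ √(π / b) / 2 := by
    rw [← integral_gaussian_Ioi, intervalIntegral.integral_of_le hB]
    exact setIntegral_mono_set (integrable_exp_neg_mul_sq hb).integrableOn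
      (.of_forall fun θ => (exp_pos _).le) (.of_forall fun θ hθ => hθ.1)
  calc ∫ θ in (0 : ℝ)..B, θ ^ 2 * exp (-b * θ ^ 2)
      = -(B * exp (-b * B ^ 2) / (2 * b)) + (∫ θ in (0 : ℝ)..B, exp (-b * θ ^ 2)) / (2 * b) := by
        rw [hparts]; ring
    _ ≤ 0 + √(π / b) / 2 / (2 * b) := by
        gcongr
        rw [neg_nonpos]
        positivity
    _ = _ := zero_add _

theorem exp_neg_le_factorial_div_pow {y : ℝ} (hy : 0 < y) (m : ℕ) : exp (-y) ≤ m ! / y ^ m := by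
  rw [exp_neg, inv_le_comm₀ (exp_pos _) (by positivity), inv_div]
  exact pow_div_factorial_le_exp y hy.le m

theorem integral_exp_neg_decay_mul_le {a : ℝ} (ha : 0 < a) (ha1 : a ≤ 1 / 50) {g : ℝ → ℝ}
    (hg : Continuous g) {T B : ℝ} (hT0 : 0 ≤ T) (hT : T ≤ π) (hg0 : ∀ θ ∈ Set.Icc T π, 0 ≤ g θ)
    (hgB : ∀ θ ∈ Set.Icc T π, g θ ≤ B) :
    ∫ θ in T..π, exp (-decay (1 - a) θ) * g θ ≤
      (∫ θ in T..π, exp (-(1 / (2 * a ^ 3)) * θ ^ 2) * g θ) + π * exp (-(0.46 / a)) * B := by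
  have hdecay := continuous_decay (x := 1 - a) (by linarith) (by linarith)
  have hB : 0 ≤ B := (hg0 π ⟨hT, le_rfl⟩).trans (hgB π ⟨hT, le_rfl⟩)
  calc ∫ θ in T..π, exp (-decay (1 - a) θ) * g θ
      ≤ ∫ θ in T..π, (exp (-(1 / (2 * a ^ 3)) * θ ^ 2) * g θ + exp (-(0.46 / a)) * B) := by
        refine integral_mono_on hT ((by fun_prop : Continuous _).intervalIntegrable _ _)
          ((by fun_prop : Continuous _).intervalIntegrable _ _) fun θ hθ => ?_
        calc exp (-decay (1 - a) θ) * g θ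
            ≤ (exp (-(1 / (2 * a ^ 3)) * θ ^ 2) + exp (-(0.46 / a))) * g θ :=
              mul_le_mul_of_nonneg_right (exp_neg_decay_le ha ha1 (hT0.trans hθ.1) hθ.2) (hg0 θ hθ)
          _ = exp (-(1 / (2 * a ^ 3)) * θ ^ 2) * g θ + exp (-(0.46 / a)) * g θ := add_mul _ _ _
          _ ≤ _ := by
            gcongr
            exact hgB θ hθ
    _ = (∫ θ in T..π, exp (-(1 / (2 * a ^ 3)) * θ ^ 2) * g θ) +
          (π - T) * exp (-(0.46 / a)) * B := by
        rw [intervalIntegral.integral_add ((by fun_prop : Continuous _).intervalIntegrable _ _)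
          ((by fun_prop : Continuous _).intervalIntegrable _ _), intervalIntegral.integral_const,
          smul_eq_mul, mul_assoc]
    _ ≤ _ := by
        gcongr
        exact sub_le_self _ hT0

/-! ### The coefficient integrals at the saddle point -/

/-- The circle of radius `1 - s ^ 2` passes through the saddle point of
`z ↦ (∑ m, p m * z ^ m) / z ^ ν`, and is close enough to the unit circle for the estimates of
`decay` and `phase`. The integrand of `coeffIntegral (1 - s ^ 2) ν` concentrates at scale `s ^ 3`,
hence the parametrisation by `s`. -/
structure IsSaddlePoint (s ν : ℝ) : Prop where
  pos : 0 < s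
  sq_le : s ^ 2 ≤ 1 / 50
  sigmaMoment_eq : sigmaMoment 0 (1 - s ^ 2) = ν

theorem exists_sigmaMoment_zero_eq {ν : ℝ} (hν : 0 ≤ ν) :
    ∃ x : ℝ, 0 ≤ x ∧ x < 1 ∧ sigmaMoment 0 x = ν := by
  have hr0 : 0 ≤ ν / (ν + 1) := by positivity
  have hr1 : ν / (ν + 1) < 1 := (div_lt_one (by positivity)).2 (lt_add_one ν)
  have hcont : ContinuousOn (sigmaMoment 0) (Set.Icc 0 (ν / (ν + 1))) := by
    refine continuousOn_tsum (fun k => by fun_prop) (summable_sigmaMoment 0 hr0 hr1)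
      fun k x ⟨hx0, hx1⟩ => ?_
    rw [Real.norm_of_nonneg (by positivity)]
    gcongr
  have hzero : sigmaMoment 0 0 ≤ ν := by
    rw [sigmaMoment, tsum_eq_single 0 fun k hk => by rw [zero_pow hk, mul_zero]]
    simpa using hν
  have hgeom : ν ≤ sigmaMoment 0 (ν / (ν + 1)) := by
    have hsum := (hasSum_geometric_of_lt_one hr0 hr1).sub (hasSum_ite_eq (0 : ℕ) (1 : ℝ))
    rw [show (1 - ν / (ν + 1))⁻¹ - 1 = ν by field_simp; ring] at hsum
    refine hasSum_le (fun k => ?_) hsum (summable_sigmaMoment 0 hr0 hr1).hasSum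
    rcases Nat.eq_zero_or_pos k with rfl | hk
    · simp
    · rw [if_neg hk.ne', sub_zero, pow_zero, one_mul]
      exact le_mul_of_one_le_left (by positivity) (by exact_mod_cast hk.trans_le (le_sigma_one k))
  obtain ⟨x, hx, hxν⟩ := intermediate_value_Icc hr0 hcont ⟨hzero, hgeom⟩
  exact ⟨x, hx.1, hx.2.trans_lt hr1, hxν⟩

theorem mul_one_sub_sq_le_of_sigmaMoment_zero_eq {x ν : ℝ} (hx : 0 ≤ x) (hx1 : x < 1)
    (hν : sigmaMoment 0 x = ν) : ν * (1 - x) ^ 2 ≤ 1.645 * x := by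
  have : 0 < 1 - x := sub_pos.2 hx1
  have hle := sigmaMoment_zero_le hx hx1
  rw [hν, ← mul_div_assoc, le_div_iff₀ (by positivity)] at hle
  refine hle.trans (mul_le_mul_of_nonneg_right ?_ hx)
  nlinarith [pi_lt_d4, pi_pos]

theorem exists_isSaddlePoint {ν : ℝ} (hν : 4098 ≤ ν) : ∃ s, IsSaddlePoint s ν := by
  obtain ⟨x, hx, hx1, hxν⟩ := exists_sigmaMoment_zero_eq (by linarith : 0 ≤ ν)
  have hle := mul_one_sub_sq_le_of_sigmaMoment_zero_eq hx hx1 hxν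
  have hsq : √(1 - x) ^ 2 = 1 - x := Real.sq_sqrt (sub_nonneg.2 hx1.le)
  refine ⟨√(1 - x), Real.sqrt_pos.2 (sub_pos.2 hx1), ?_, by rw [hsq, sub_sub_cancel, hxν]⟩
  rw [hsq]
  by_contra! hfar
  nlinarith

namespace IsSaddlePoint

variable {s ν : ℝ}

theorem scale_le (h : IsSaddlePoint s ν) : s ≤ 0.1415 :=
  le_of_abs_le (abs_le_of_sq_le_sq (h.sq_le.trans (by norm_num)) (by norm_num))

theorem pow_six_le (h : IsSaddlePoint s ν) : s ^ 6 ≤ 0.00001 := by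
  calc s ^ 6 = (s ^ 2) ^ 3 := by ring
    _ ≤ (1 / 50) ^ 3 := by gcongr; exact h.sq_le
    _ ≤ 0.00001 := by norm_num

theorem radius_nonneg (h : IsSaddlePoint s ν) : 0 ≤ 1 - s ^ 2 := by linarith [h.sq_le]

theorem radius_lt_one (h : IsSaddlePoint s ν) : 1 - s ^ 2 < 1 := sub_lt_self _ (pow_pos h.pos 2)

theorem add_one_mul_pow_six_le (h : IsSaddlePoint s ν) : (ν + 1) * s ^ 6 ≤ 0.033 := by
  have hle := mul_one_sub_sq_le_of_sigmaMoment_zero_eq h.radius_nonneg h.radius_lt_one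
    h.sigmaMoment_eq
  rw [sub_sub_cancel] at hle
  have hsq := h.sq_le
  calc (ν + 1) * s ^ 6 = (ν * (s ^ 2) ^ 2 + (s ^ 2) ^ 2) * s ^ 2 := by ring
    _ ≤ 1.65 * (1 / 50) := by
      gcongr
      nlinarith [sq_nonneg s]
    _ = 0.033 := by norm_num

theorem mul_pow_three_le_pi (h : IsSaddlePoint s ν) {r : ℝ} (hr : r ≤ 2) : r * s ^ 3 ≤ π := by
  have hcube : s ^ 3 ≤ 1 := pow_le_one₀ h.pos.le (h.scale_le.trans (by norm_num))
  have := pow_pos h.pos 3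
  nlinarith [pi_gt_three]

theorem decay_le (h : IsSaddlePoint s ν) (θ : ℝ) :
    decay (1 - s ^ 2) θ ≤ 2.05 / s ^ 6 * θ ^ 2 := by
  have hs := h.pos
  have hmoment := sigmaMoment_one_le (pow_pos hs 2) (h.sq_le.trans (by norm_num))
  calc decay (1 - s ^ 2) θ ≤ sigmaMoment 1 (1 - s ^ 2) * (θ ^ 2 / 2) :=
        PartitionRatio.decay_le h.radius_nonneg h.radius_lt_one θ
    _ ≤ 4.1 / (s ^ 2) ^ 3 * (θ ^ 2 / 2) := by gcongr
    _ = 2.05 / s ^ 6 * θ ^ 2 := by ring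

theorem abs_phase_sub_le (h : IsSaddlePoint s ν) {r θ : ℝ} (hθ0 : 0 ≤ θ) (hθ : θ ≤ r * s ^ 3) :
    |phase (1 - s ^ 2) θ - ν * θ| ≤ 2.4 * r ^ 3 * 0.1415 := by
  have hs := h.pos
  have hr : 0 ≤ r := nonneg_of_mul_nonneg_left (hθ0.trans hθ) (by positivity)
  have hmoment := sigmaMoment_two_le (pow_pos hs 2) (h.sq_le.trans (by norm_num))
  rw [← h.sigmaMoment_eq]
  calc |phase (1 - s ^ 2) θ - sigmaMoment 0 (1 - s ^ 2) * θ|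
      ≤ sigmaMoment 2 (1 - s ^ 2) * (θ ^ 3 / 6) :=
        PartitionRatio.abs_phase_sub_le h.radius_nonneg h.radius_lt_one hθ0
    _ ≤ 14.4 / (s ^ 2) ^ 4 * ((r * s ^ 3) ^ 3 / 6) := by gcongr
    _ = 2.4 * r ^ 3 * s := by field_simp; ring
    _ ≤ _ := by
      gcongr
      exact h.scale_le

theorem pi_mul_exp_neg_le (h : IsSaddlePoint s ν) :
    π * exp (-(0.46 / s ^ 2)) ≤ 0.3 * s ^ 9 := by
  have hs := h.pos
  have hexp := exp_neg_le_factorial_div_pow (y := 0.46 / s ^ 2) (by positivity) 22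
  calc π * exp (-(0.46 / s ^ 2)) ≤ 3.15 * ((22 ! : ℕ) / (0.46 / s ^ 2) ^ 22) := by
        gcongr
        exact pi_lt_d2.le
    _ = 3.15 * ((22 ! : ℕ) / 0.46 ^ 22) * s ^ 35 * s ^ 9 := by field_simp
    _ ≤ 3.15 * ((22 ! : ℕ) / 0.46 ^ 22) * 0.1415 ^ 35 * s ^ 9 := by
        gcongr
        exact h.scale_le
    _ ≤ 0.3 * s ^ 9 := by
        gcongr
        norm_num [Nat.factorial]

theorem integral_exp_neg_decay_le (h : IsSaddlePoint s ν) :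
    ∫ θ in (1.6 * s ^ 3)..π, exp (-decay (1 - s ^ 2) θ) ≤ 0.18 * s ^ 3 := by
  have hs := h.pos
  have hT := h.mul_pow_three_le_pi (r := 1.6) (by norm_num)
  have hexp : exp (-1.28) ≤ 0.28 := by
    rw [exp_neg, inv_le_comm₀ (exp_pos _) (by norm_num)]
    refine le_trans ?_ (sum_le_exp_of_nonneg (by norm_num) 8)
    norm_num [sum_range_succ, Nat.factorial]
  have hmajorant := integral_exp_neg_decay_mul_le (pow_pos hs 2) h.sq_le
    (g := fun _ => 1) (by fun_prop) (by positivity) hT (fun _ _ => zero_le_one) (fun _ _ => le_rfl)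
  simp only [mul_one] at hmajorant
  calc ∫ θ in (1.6 * s ^ 3)..π, exp (-decay (1 - s ^ 2) θ)
      ≤ exp (-(1 / (2 * (s ^ 2) ^ 3)) * (1.6 * s ^ 3) ^ 2) /
          (2 * (1 / (2 * (s ^ 2) ^ 3)) * (1.6 * s ^ 3)) + 0.3 * s ^ 9 :=
        hmajorant.trans (add_le_add
          (integral_exp_neg_mul_sq_le (by positivity) (by positivity) hT) h.pi_mul_exp_neg_le)
    _ = exp (-1.28) / 1.6 * s ^ 3 + 0.3 * s ^ 6 * s ^ 3 := by
        rw [show -(1 / (2 * (s ^ 2) ^ 3)) * (1.6 * s ^ 3) ^ 2 = -1.28 by field_simp; norm_num]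
        field_simp
    _ ≤ 0.28 / 1.6 * s ^ 3 + 0.3 * 0.00001 * s ^ 3 := by
        gcongr
        exact h.pow_six_le
    _ ≤ 0.18 * s ^ 3 := by
        rw [← add_mul]
        gcongr
        norm_num

theorem le_integral_coeffIntegrand_center (h : IsSaddlePoint s ν) :
    0.46 * s ^ 3 ≤ ∫ θ in (0 : ℝ)..(0.7 * s ^ 3),
      exp (-decay (1 - s ^ 2) θ) * cos (phase (1 - s ^ 2) θ - ν * θ) := by
  have hs := h.pos
  have hcos {θ : ℝ} (hθ : θ ∈ Set.Icc 0 (0.7 * s ^ 3)) :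
      0.993 ≤ cos (phase (1 - s ^ 2) θ - ν * θ) := by
    have hphase := abs_le.1 (h.abs_phase_sub_le hθ.1 hθ.2)
    have hsq := sq_le_sq' hphase.1 hphase.2
    refine le_trans ?_ one_sub_sq_div_two_le_cos
    linarith
  have hval : ∫ θ in (0 : ℝ)..(0.7 * s ^ 3), (1 - 2.05 / s ^ 6 * θ ^ 2) * 0.993 =
      (0.7 - 2.05 * 0.343 / 3) * 0.993 * s ^ 3 := by
    rw [intervalIntegral.integral_mul_const, intervalIntegral.integral_sub
      ((by fun_prop : Continuous _).intervalIntegrable _ _)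
      ((by fun_prop : Continuous _).intervalIntegrable _ _), intervalIntegral.integral_const,
      intervalIntegral.integral_const_mul, integral_pow, smul_eq_mul]
    field_simp
    ring
  calc 0.46 * s ^ 3 ≤ (0.7 - 2.05 * 0.343 / 3) * 0.993 * s ^ 3 := by gcongr; norm_num
    _ = ∫ θ in (0 : ℝ)..(0.7 * s ^ 3), (1 - 2.05 / s ^ 6 * θ ^ 2) * 0.993 := hval.symm
    _ ≤ _ := by
      refine integral_mono_on (by positivity) ((by fun_prop : Continuous _).intervalIntegrable _ _)
        ((continuous_coeffIntegrand h.radius_nonneg h.radius_lt_one ν).intervalIntegrable _ _)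
        fun θ hθ => ?_
      have hexp : 1 - 2.05 / s ^ 6 * θ ^ 2 ≤ exp (-decay (1 - s ^ 2) θ) := by
        linarith [add_one_le_exp (-decay (1 - s ^ 2) θ), h.decay_le θ]
      exact mul_le_mul hexp (hcos hθ) (by norm_num) (exp_pos _).le

theorem integral_coeffIntegrand_middle_nonneg (h : IsSaddlePoint s ν) :
    0 ≤ ∫ θ in (0.7 * s ^ 3)..(1.6 * s ^ 3),
      exp (-decay (1 - s ^ 2) θ) * cos (phase (1 - s ^ 2) θ - ν * θ) := by
  have hs := h.pos
  refine integral_nonneg (by gcongr; norm_num) fun θ hθ => ?_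
  have hphase := abs_le.1 (h.abs_phase_sub_le (le_trans (by positivity) hθ.1) hθ.2)
  exact mul_nonneg (exp_pos _).le (cos_nonneg_of_neg_pi_div_two_le_of_le
    (by linarith [pi_gt_three]) (by linarith [pi_gt_three]))

theorem le_integral_coeffIntegrand_tail (h : IsSaddlePoint s ν) :
    -(0.18 * s ^ 3) ≤ ∫ θ in (1.6 * s ^ 3)..π,
      exp (-decay (1 - s ^ 2) θ) * cos (phase (1 - s ^ 2) θ - ν * θ) := by
  have hdecay := continuous_decay h.radius_nonneg h.radius_lt_one
  refine (neg_le_neg h.integral_exp_neg_decay_le).trans ?_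
  rw [← intervalIntegral.integral_neg]
  refine integral_mono_on (h.mul_pow_three_le_pi (by norm_num))
    ((by fun_prop : Continuous _).intervalIntegrable _ _)
    ((continuous_coeffIntegrand h.radius_nonneg h.radius_lt_one ν).intervalIntegrable _ _)
    fun θ _ => ?_
  rw [← mul_neg_one]
  exact mul_le_mul_of_nonneg_left (neg_one_le_cos _) (exp_pos _).le

theorem le_coeffIntegral (h : IsSaddlePoint s ν) : 0.28 * s ^ 3 ≤ coeffIntegral (1 - s ^ 2) ν := by
  have hint (a b : ℝ) := (continuous_coeffIntegrand h.radius_nonneg h.radius_lt_one ν)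
    |>.intervalIntegrable (μ := volume) a b
  rw [coeffIntegral, ← integral_add_adjacent_intervals (hint 0 (0.7 * s ^ 3)) (hint _ π),
    ← integral_add_adjacent_intervals (hint (0.7 * s ^ 3) (1.6 * s ^ 3)) (hint _ π)]
  linarith [h.le_integral_coeffIntegrand_center, h.integral_coeffIntegrand_middle_nonneg,
    h.le_integral_coeffIntegrand_tail]

theorem integral_exp_neg_decay_mul_one_sub_cos_le (h : IsSaddlePoint s ν) :
    ∫ θ in (0 : ℝ)..π, exp (-decay (1 - s ^ 2) θ) * (2 * (1 - cos θ)) ≤ 2.5 * s ^ 9 := by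
  have hs := h.pos
  have hmajorant := integral_exp_neg_decay_mul_le (pow_pos hs 2) h.sq_le
    (g := fun θ => 2 * (1 - cos θ)) (by fun_prop) le_rfl pi_pos.le
    (fun θ _ => by linarith [cos_le_one θ])
    (fun θ _ => (by linarith [neg_one_le_cos θ] : 2 * (1 - cos θ) ≤ 4))
  have hquad : ∫ θ in (0 : ℝ)..π, exp (-(1 / (2 * (s ^ 2) ^ 3)) * θ ^ 2) * (2 * (1 - cos θ)) ≤
      ∫ θ in (0 : ℝ)..π, θ ^ 2 * exp (-(1 / (2 * (s ^ 2) ^ 3)) * θ ^ 2) := by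
    refine integral_mono_on pi_pos.le ((by fun_prop : Continuous _).intervalIntegrable _ _)
      ((by fun_prop : Continuous _).intervalIntegrable _ _) fun θ _ => ?_
    rw [mul_comm (θ ^ 2)]
    gcongr
    linarith [one_sub_sq_div_two_le_cos (x := θ)]
  have hsqrt : √(π / (1 / (2 * (s ^ 2) ^ 3))) ≤ 2.51 * s ^ 3 := by
    rw [Real.sqrt_le_left (by positivity)]
    calc π / (1 / (2 * (s ^ 2) ^ 3)) = π * 2 * s ^ 6 := by field_simp
      _ ≤ 2.51 ^ 2 * s ^ 6 := by
        gcongr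
        linarith [pi_lt_d2]
      _ = (2.51 * s ^ 3) ^ 2 := by ring
  have hgauss : ∫ θ in (0 : ℝ)..π, θ ^ 2 * exp (-(1 / (2 * (s ^ 2) ^ 3)) * θ ^ 2) ≤
      1.255 * s ^ 9 := by
    calc _ ≤ √(π / (1 / (2 * (s ^ 2) ^ 3))) / 2 / (2 * (1 / (2 * (s ^ 2) ^ 3))) :=
          integral_sq_mul_exp_neg_mul_sq_le (by positivity) pi_pos.le
      _ ≤ 2.51 * s ^ 3 / 2 / (2 * (1 / (2 * (s ^ 2) ^ 3))) := by gcongr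
      _ = 1.255 * s ^ 9 := by field_simp; norm_num
  linarith [h.pi_mul_exp_neg_le, pow_pos hs 9]

theorem integral_exp_neg_decay_mul_sin_le (h : IsSaddlePoint s ν) :
    ∫ θ in (0 : ℝ)..π, exp (-decay (1 - s ^ 2) θ) * (2 * sin θ) ≤ 2.1 * s ^ 6 := by
  have hs := h.pos
  have hmajorant := integral_exp_neg_decay_mul_le (pow_pos hs 2) h.sq_le
    (g := fun θ => 2 * sin θ) (by fun_prop) le_rfl pi_pos.le
    (fun θ hθ => by linarith [sin_nonneg_of_mem_Icc hθ])
    (fun θ _ => (by linarith [sin_le_one θ] : 2 * sin θ ≤ 2))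
  have hlin : ∫ θ in (0 : ℝ)..π, exp (-(1 / (2 * (s ^ 2) ^ 3)) * θ ^ 2) * (2 * sin θ) ≤
      ∫ θ in (0 : ℝ)..π, 2 * (θ * exp (-(1 / (2 * (s ^ 2) ^ 3)) * θ ^ 2)) := by
    refine integral_mono_on pi_pos.le ((by fun_prop : Continuous _).intervalIntegrable _ _)
      ((by fun_prop : Continuous _).intervalIntegrable _ _) fun θ hθ => ?_
    rw [← mul_assoc 2, mul_comm (2 * θ)]
    gcongr
    exact sin_le hθ.1
  have hgauss : ∫ θ in (0 : ℝ)..π, 2 * (θ * exp (-(1 / (2 * (s ^ 2) ^ 3)) * θ ^ 2)) ≤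
      2 * s ^ 6 := by
    rw [intervalIntegral.integral_const_mul, integral_mul_exp_neg_mul_sq (by positivity)]
    calc _ ≤ 2 * (1 / (2 * (1 / (2 * (s ^ 2) ^ 3)))) := by
          gcongr
          rw [zero_pow two_ne_zero, mul_zero, exp_zero]
          exact sub_le_self _ (exp_pos _).le
      _ = 2 * s ^ 6 := by field_simp
  have hpow : s ^ 9 ≤ 0.1 * s ^ 6 := by
    calc s ^ 9 = s ^ 3 * s ^ 6 := by ring
      _ ≤ 0.1415 ^ 3 * s ^ 6 := by gcongr; exact h.scale_le
      _ ≤ 0.1 * s ^ 6 := by gcongr; norm_num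
  linarith [h.pi_mul_exp_neg_le, pow_pos hs 6]

end IsSaddlePoint

theorem mul_sq_lt_of_abs_le {ν J A B δ ε : ℝ} (hν : 0 ≤ ν + 1) (hJ : 0 ≤ J)
    (hδ : |A + B - 2 * J| ≤ δ) (hε : |A - B| ≤ ε)
    (hlt : (ν + 1) * (4 * J * δ + ε ^ 2) < 4 * J ^ 2) : ν * J ^ 2 < (ν + 1) * (B * A) := by
  have hdiff : (A - B) ^ 2 ≤ ε ^ 2 := sq_le_sq' (abs_le.1 hε).1 (abs_le.1 hε).2
  have hsum : 4 * J ^ 2 - 4 * J * δ ≤ (A + B) ^ 2 := by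
    nlinarith [sq_nonneg (A + B - 2 * J), mul_le_mul_of_nonneg_left (abs_le.1 hδ).1 hJ]
  have hprod : 4 * J ^ 2 - (4 * J * δ + ε ^ 2) ≤ 4 * (B * A) := by linarith
  linarith [mul_le_mul_of_nonneg_left hprod hν]

theorem IsSaddlePoint.mul_coeffIntegral_sq_lt {s ν : ℝ} (h : IsSaddlePoint s ν) (hν : 0 ≤ ν) :
    ν * coeffIntegral (1 - s ^ 2) ν ^ 2 <
      (ν + 1) * (coeffIntegral (1 - s ^ 2) (ν - 1) * coeffIntegral (1 - s ^ 2) (ν + 1)) := by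
  have hs := h.pos
  have hJ := h.le_coeffIntegral
  have hJ0 : 0 < coeffIntegral (1 - s ^ 2) ν := lt_of_lt_of_le (by positivity) hJ
  refine mul_sq_lt_of_abs_le (by positivity) hJ0.le
    ((abs_coeffIntegral_add_sub_le h.radius_nonneg h.radius_lt_one ν).trans
      h.integral_exp_neg_decay_mul_one_sub_cos_le)
    ((abs_coeffIntegral_sub_le h.radius_nonneg h.radius_lt_one ν).trans
      h.integral_exp_neg_decay_mul_sin_le) ?_
  generalize coeffIntegral (1 - s ^ 2) ν = J at hJ hJ0
  calc (ν + 1) * (4 * J * (2.5 * s ^ 9) + (2.1 * s ^ 6) ^ 2)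
      = (ν + 1) * s ^ 6 * (10 * J * s ^ 3 + 4.41 * s ^ 6) := by ring
    _ ≤ 0.033 * (10 * J * s ^ 3 + 4.41 * s ^ 6) := by
      gcongr
      exact h.add_one_mul_pow_six_le
    _ < 4 * J ^ 2 := by nlinarith [mul_le_mul hJ hJ (by positivity) hJ0.le, pow_pos hs 3]

theorem mul_p_sq_lt_of_le {n : ℕ} (hn : 4098 ≤ n) :
    n * p n ^ 2 < (n + 1) * (p (n - 1) * p (n + 1)) := by
  obtain ⟨s, h⟩ := exists_isSaddlePoint (by exact_mod_cast hn : (4098 : ℝ) ≤ n)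
  have hlt := h.mul_coeffIntegral_sq_lt (Nat.cast_nonneg _)
  have hp := exp_logGen_mul_coeffIntegral h.radius_nonneg h.radius_lt_one
  have hx : 0 < 1 - s ^ 2 := by linarith [h.sq_le]
  generalize 1 - s ^ 2 = x at hlt hp hx
  rw [← Nat.cast_pred (by lia), ← Nat.cast_add_one] at hlt
  have hpow : x ^ (n - 1) * x ^ (n + 1) = (x ^ n) ^ 2 := by
    rw [← pow_mul, ← pow_add]
    congr 1
    lia
  refine lt_of_mul_lt_mul_left ?_ (sq_nonneg (π * x ^ n))
  calc (π * x ^ n) ^ 2 * (n * p n ^ 2)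
      = n * (π * (p n * x ^ n)) ^ 2 := by ring
    _ = exp (logGen x) ^ 2 * (n * coeffIntegral x n ^ 2) := by rw [← hp]; ring
    _ < exp (logGen x) ^ 2 *
          ((n + 1 : ℕ) * (coeffIntegral x (n - 1 : ℕ) * coeffIntegral x (n + 1 : ℕ))) := by gcongr
    _ = (n + 1 : ℕ) * ((π * (p (n - 1) * x ^ (n - 1))) * (π * (p (n + 1) * x ^ (n + 1)))) := by
        rw [← hp, ← hp]
        ring
    _ = π ^ 2 * (x ^ (n - 1) * x ^ (n + 1)) * ((n + 1) * (p (n - 1) * p (n + 1))) := by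
        push_cast
        ring
    _ = _ := by rw [hpow]; ring

/-! ### Inverting the truncated pentagonal series -/

section Pentagonal

open PowerSeries

theorem mk_card_partition_mul_pentagonalSeries :
    (PowerSeries.mk fun n => (Fintype.card n.Partition : ℤ)) * pentagonalSeries ℤ = 1 := by
  let : TopologicalSpace ℤ := ⊥
  have : DiscreteTopology ℤ := ⟨rfl⟩
  open scoped PowerSeries.WithPiTopology in
  have hprod := (Nat.Partition.hasProd_powerSeriesMk_card_restricted ℤ fun _ => True).mul
    (WithPiTopology.hasProd_one_sub_X_pow ℤ)
  have hfactor (i : ℕ) : (if True then ∑' j : ℕ, (X : ℤ⟦X⟧) ^ ((i + 1) * j) else 1) *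
      (1 - X ^ (i + 1)) = 1 := by
    simp_rw [if_true, pow_mul]
    exact WithPiTopology.tsum_pow_mul_one_sub_of_constantCoeff_eq_zero (by simp)
  simp only [hfactor] at hprod
  simpa [Nat.Partition.restricted] using hprod.unique hasProd_one

theorem coeff_pentagonalSeries_eq_sum {m K : ℕ} (hm : m < K * (3 * K + 1) / 2) :
    coeff m (pentagonalSeries ℤ) = ∑ k ∈ range K, (-1) ^ k *
      ((if m = k * (3 * k + 1) / 2 then 1 else 0) -
        if m = (k + 1) * (3 * k + 2) / 2 then 1 else 0) := by
  let : TopologicalSpace ℤ := ⊥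
  have : DiscreteTopology ℤ := ⟨rfl⟩
  open scoped PowerSeries.WithPiTopology in
  have hsum := (WithPiTopology.hasSum_pow_pentagonal_sub_pentagonalSeries ℤ).map (coeff m)
    (WithPiTopology.continuous_coeff ℤ m)
  have hneg (k : ℕ) : pentagonal (-k) = k * (3 * k + 1) / 2 := by
    rw [pentagonal_neg]
    norm_cast
  have hpos (k : ℕ) : pentagonal (k + 1) = (k + 1) * (3 * k + 2) / 2 := by
    rw [pentagonal_def, show (3 : ℤ) * (k + 1) - 1 = 3 * k + 2 by ring]
    norm_cast
  have hterm (k : ℕ) : (⇑(coeff (R := ℤ) m) ∘ fun k : ℕ => (-1) ^ k *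
      ((X : ℤ⟦X⟧) ^ pentagonal (-k) - X ^ pentagonal (k + 1))) k = (-1) ^ k *
      ((if m = k * (3 * k + 1) / 2 then 1 else 0) -
        if m = (k + 1) * (3 * k + 2) / 2 then 1 else 0) := by
    have hC : ((-1) ^ k : ℤ⟦X⟧) = C ((-1) ^ k) := by simp
    simp only [Function.comp, hC, coeff_C_mul, map_sub, coeff_X_pow, hneg, hpos]
  rw [funext hterm] at hsum
  refine hsum.unique (hasSum_sum_of_ne_finset_zero fun k hk => ?_)
  rw [Finset.mem_range, not_lt] at hk
  have hKk : K * (3 * K + 1) ≤ k * (3 * k + 1) := by gcongr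
  have : k * (3 * k + 1) ≤ (k + 1) * (3 * k + 2) := by gcongr <;> lia
  rw [if_neg (by lia), if_neg (by lia)]
  simp

theorem pow_dvd_sum_card_partition_mul_sub_one (q : ℤ) {N K : ℕ} (h : N ≤ K * (3 * K + 1) / 2) :
    q ^ N ∣ (∑ n ∈ range N, (Fintype.card n.Partition : ℤ) * q ^ n) *
      (∑ k ∈ range K, (-1) ^ k * (q ^ (k * (3 * k + 1) / 2) - q ^ ((k + 1) * (3 * k + 2) / 2))) -
        1 := by
  let P : Polynomial ℤ := ∑ n ∈ range N,
    Polynomial.C (Fintype.card n.Partition : ℤ) * Polynomial.X ^ n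
  let E : Polynomial ℤ := ∑ k ∈ range K, Polynomial.C ((-1) ^ k) *
    (Polynomial.X ^ (k * (3 * k + 1) / 2) - Polynomial.X ^ ((k + 1) * (3 * k + 2) / 2))
  have hP (i : ℕ) (hi : i < N) : P.coeff i = Fintype.card i.Partition := by
    simp [P, Polynomial.finsetSum_coeff, Polynomial.coeff_X_pow, hi]
  have hE (i : ℕ) (hi : i < N) : E.coeff i = coeff i (pentagonalSeries ℤ) := by
    rw [coeff_pentagonalSeries_eq_sum (hi.trans_le h)]
    simp only [E, Polynomial.finsetSum_coeff, Polynomial.coeff_C_mul, Polynomial.coeff_sub,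
      Polynomial.coeff_X_pow]
  have hdvd : Polynomial.X ^ N ∣ P * E - 1 := by
    refine Polynomial.X_pow_dvd_iff.2 fun d hd => ?_
    have hcoeff := congrArg (coeff d) mk_card_partition_mul_pentagonalSeries
    rw [PowerSeries.coeff_mul, PowerSeries.coeff_one] at hcoeff
    rw [Polynomial.coeff_sub, Polynomial.coeff_mul, Polynomial.coeff_one, sub_eq_zero, ← hcoeff]
    refine Finset.sum_congr rfl fun i hi => ?_
    have := mem_antidiagonal.1 hi
    rw [hP _ (by lia), hE _ (by lia), coeff_mk]
  simpa [P, E, Polynomial.eval_finsetSum] using map_dvd (Polynomial.evalRingHom q) hdvd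

end Pentagonal

/-- The absolute value of the sum of the first `K` pairs
`(-1) ^ k * (q ^ (k * (3 * k + 1) / 2) - q ^ ((k + 1) * (3 * k + 2) / 2))` of terms of the
pentagonal series at `q`; for `2 ≤ q` the subtractions do not truncate. -/
def pentagonalSum (q : ℕ) : ℕ → ℕ
  | 0 => 0
  | K + 1 => q ^ ((K + 1) * (3 * K + 2) / 2) - q ^ (K * (3 * K + 1) / 2) - pentagonalSum q K

theorem pentagonalSum_add_pow_le {q : ℕ} (hq : 2 ≤ q) (K : ℕ) :
    pentagonalSum q K + q ^ (K * (3 * K + 1) / 2) ≤ q ^ ((K + 1) * (3 * K + 2) / 2) := by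
  have hle : pentagonalSum q K ≤ q ^ (K * (3 * K + 1) / 2) := by
    cases K with
    | zero => simp [pentagonalSum]
    | succ K =>
      calc pentagonalSum q (K + 1) ≤ q ^ ((K + 1) * (3 * K + 2) / 2) :=
            (Nat.sub_le _ _).trans (Nat.sub_le _ _)
        _ ≤ q ^ ((K + 1) * (3 * (K + 1) + 1) / 2) :=
            Nat.pow_le_pow_right (by lia) (Nat.div_le_div_right (Nat.mul_le_mul_left _ (by lia)))
  have hexp : K * (3 * K + 1) / 2 + 1 ≤ (K + 1) * (3 * K + 2) / 2 := by
    rw [← Nat.add_mul_div_right _ _ two_pos]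
    exact Nat.div_le_div_right (by nlinarith)
  calc pentagonalSum q K + q ^ (K * (3 * K + 1) / 2) ≤ q ^ (K * (3 * K + 1) / 2) * 2 := by lia
    _ ≤ q ^ (K * (3 * K + 1) / 2 + 1) := by
        rw [pow_succ]
        gcongr
    _ ≤ _ := Nat.pow_le_pow_right (by lia) hexp

theorem neg_one_pow_mul_pentagonalSum {q : ℕ} (hq : 2 ≤ q) (K : ℕ) :
    (-1) ^ K * (pentagonalSum q K : ℤ) = ∑ k ∈ range K, (-1) ^ k *
      ((q : ℤ) ^ (k * (3 * k + 1) / 2) - (q : ℤ) ^ ((k + 1) * (3 * k + 2) / 2)) := by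
  induction K with
  | zero => simp [pentagonalSum]
  | succ K ih =>
    have hle := pentagonalSum_add_pow_le hq K
    rw [sum_range_succ, ← ih, pentagonalSum, Nat.cast_sub (by lia), Nat.cast_sub (by lia)]
    push_cast
    ring

theorem sum_card_partition_mul_pentagonalSum_modEq {q N K : ℕ} (hq : 2 ≤ q) (hK : Even K)
    (h : N ≤ K * (3 * K + 1) / 2) :
    (∑ n ∈ range N, Fintype.card n.Partition * q ^ n) * pentagonalSum q K ≡ 1 [MOD q ^ N] := by
  refine ((Nat.modEq_iff_dvd).2 ?_).symm
  have hdvd := pow_dvd_sum_card_partition_mul_sub_one q h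
  rw [← neg_one_pow_mul_pentagonalSum hq, hK.neg_one_pow, one_mul] at hdvd
  exact_mod_cast hdvd

/-- Newton's iteration for the inverse of `e` modulo `q ^ 2 ^ i`, where `e ≡ 1 [MOD q]`. -/
def newtonInverse (q e : ℕ) : ℕ → ℕ
  | 0 => 1
  | i + 1 => newtonInverse q e i *
      (q ^ 2 ^ (i + 1) + 2 - e * newtonInverse q e i % q ^ 2 ^ (i + 1)) % q ^ 2 ^ (i + 1)

theorem mul_newtonInverse_modEq {q e : ℕ} (hq : 0 < q) (he : e ≡ 1 [MOD q]) (i : ℕ) :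
    e * newtonInverse q e i ≡ 1 [MOD q ^ 2 ^ i] := by
  induction i with
  | zero => simpa [newtonInverse] using he
  | succ i ih =>
    have hsq : ((q ^ 2 ^ (i + 1) : ℕ) : ℤ) ∣ (1 - e * newtonInverse q e i) ^ 2 := by
      rw [pow_succ 2, pow_mul, Nat.cast_pow]
      exact pow_dvd_pow_of_dvd (by exact_mod_cast Nat.modEq_iff_dvd.1 ih) 2
    rw [newtonInverse]
    generalize newtonInverse q e i = y at hsq
    have hM : 0 < q ^ 2 ^ (i + 1) := by positivity
    generalize q ^ 2 ^ (i + 1) = M at hsq hM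
    refine ((Nat.mod_modEq _ M).mul_left e).trans (Nat.modEq_iff_dvd.2 ?_)
    have hdiv := Nat.div_add_mod (e * y) M
    have hmod := Nat.mod_lt (e * y) hM
    generalize e * y / M = t at hdiv
    generalize e * y % M = r at hdiv hmod ⊢
    have hident : (1 : ℤ) - e * (y * (M + 2 - r)) =
        (1 - e * y) ^ 2 - M * (e * y * (1 + t)) := by
      zify at hdiv
      linear_combination e * y * hdiv
    rw [Nat.cast_mul, Nat.cast_mul, Nat.cast_sub (by lia), Nat.cast_add, Nat.cast_one,
      Nat.cast_ofNat, hident]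
    exact hsq.sub (dvd_mul_right _ _)

theorem div_pow_mod_eq_of_modEq {q N a b : ℕ} (h : a ≡ b [MOD q ^ N]) {n : ℕ} (hn : n < N) :
    a / q ^ n % q = b / q ^ n % q := by
  obtain ⟨M, rfl⟩ : ∃ M, N = n + (M + 1) := ⟨N - (n + 1), by lia⟩
  have hdigit (a : ℕ) : a % q ^ (n + (M + 1)) / q ^ n % q = a / q ^ n % q := by
    rw [pow_add, Nat.mod_mul_right_div_self, Nat.mod_mod_of_dvd _ (dvd_pow_self q (by lia))]
  rw [← hdigit, ← hdigit b, h]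

theorem sum_mul_pow_div_pow_mod {q N : ℕ} {d : ℕ → ℕ} (hd : ∀ n < N, d n < q) {n : ℕ}
    (hn : n < N) : (∑ i ∈ range N, d i * q ^ i) / q ^ n % q = d n := by
  have hq : 0 < q := (Nat.zero_le _).trans_lt (hd n hn)
  induction N generalizing d n with
  | zero => lia
  | succ N ih =>
    have hsplit : ∑ i ∈ range (N + 1), d i * q ^ i =
        d 0 + q * ∑ i ∈ range N, d (i + 1) * q ^ i := by
      rw [sum_range_succ', mul_sum, add_comm, pow_zero, mul_one]
      exact congrArg _ (sum_congr rfl fun i _ => by ring)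
    have hd0 := hd 0 (by lia)
    rw [hsplit]
    cases n with
    | zero => rw [pow_zero, Nat.div_one, Nat.add_mul_mod_self_left, Nat.mod_eq_of_lt hd0]
    | succ n =>
      rw [pow_succ', ← Nat.div_div_eq_div_mul, Nat.add_mul_div_left _ _ hq,
        Nat.div_eq_of_lt hd0, zero_add]
      exact ih (fun i hi => hd (i + 1) (by lia)) (by lia)

theorem newtonInverse_div_pow_mod {q N K i n : ℕ} (hq : 2 ≤ q) (hK : Even K)
    (hNK : N ≤ K * (3 * K + 1) / 2) (hNi : N ≤ 2 ^ i)
    (hcard : ∀ m < N, Fintype.card m.Partition < q) (hn : n < N) :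
    newtonInverse q (pentagonalSum q K) i / q ^ n % q = Fintype.card n.Partition := by
  have hsum := sum_card_partition_mul_pentagonalSum_modEq hq hK hNK
  have hone : pentagonalSum q K ≡ 1 [MOD q] := by
    simpa using sum_card_partition_mul_pentagonalSum_modEq (N := 1) hq hK (by lia)
  have hinv := (mul_newtonInverse_modEq (by lia) hone i).of_dvd (pow_dvd_pow q hNi)
  rw [← sum_mul_pow_div_pow_mod hcard hn]
  refine div_pow_mod_eq_of_modEq ?_ hn
  generalize ∑ m ∈ range N, Fintype.card m.Partition * q ^ m = A at hsum ⊢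
  generalize newtonInverse q (pentagonalSum q K) i = y at hinv ⊢
  calc y = 1 * y := (one_mul y).symm
    _ ≡ A * pentagonalSum q K * y [MOD q ^ N] := hsum.symm.mul_right y
    _ = A * (pentagonalSum q K * y) := mul_assoc _ _ _
    _ ≡ A * 1 [MOD q ^ N] := hinv.mul_left A
    _ = A := mul_one A

/-! ### The inequality for small arguments -/

theorem card_partition_lt_two_pow {n : ℕ} (hn : n < 4100) :
    Fintype.card n.Partition < 2 ^ 256 := by
  have hsqrt : √(2 / 3) * π * √n ≤ 170 := by
    calc √(2 / 3) * π * √n ≤ 0.82 * 3.2 * 64.1 := by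
          gcongr
          · exact Real.sqrt_le_iff.2 (by norm_num)
          · exact pi_lt_d2.le.trans (by norm_num)
          · refine Real.sqrt_le_iff.2 ⟨by norm_num, ?_⟩
            have : (n : ℝ) < 4100 := by exact_mod_cast hn
            linarith
      _ ≤ 170 := by norm_num
  have hlt : p n < 2 ^ 256 := by
    calc p n ≤ exp (√(2 / 3) * π * √n) := p_le_exp_sqrt n
      _ ≤ exp 1 ^ 170 := by
        rw [← exp_nat_mul]
        exact exp_le_exp.2 (by simpa using hsqrt)
      _ ≤ 2.8 ^ 170 := by
        gcongr
        exact exp_one_lt_d9.le.trans (by norm_num)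
      _ < 2 ^ 256 := by norm_num
  rw [p] at hlt
  exact_mod_cast hlt

/-- A number whose `n`-th digit in base `2 ^ 256` is the number of partitions of `n`, for
`n < 4100`. -/
def packedPartitions : ℕ := newtonInverse (2 ^ 256) (pentagonalSum (2 ^ 256) 54) 13

theorem packedPartitions_div_pow_mod {n : ℕ} (hn : n < 4100) :
    packedPartitions / (2 ^ 256) ^ n % 2 ^ 256 = Fintype.card n.Partition :=
  newtonInverse_div_pow_mod (by norm_num) (by decide) (by norm_num) (by norm_num)
    (fun _ => card_partition_lt_two_pow) hn

/-- Verifies `n * p n ^ 2 < (n + 1) * (p (n - 1) * p (n + 1))` for `2 ^ d` consecutive values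
starting with `n`, where the base-`q` digits of `a` are `p (n - 1)`, `p n`, …; halving the range
keeps the numbers short. -/
def checkDigits (q : ℕ) : ℕ → ℕ → ℕ → Bool
  | 0, n, a => Nat.blt (n * (a / q % q) ^ 2) ((n + 1) * ((a % q) * (a / q ^ 2 % q)))
  | d + 1, n, a => checkDigits q d n a && checkDigits q d (n + 2 ^ d) (a / q ^ 2 ^ d)

theorem lt_of_checkDigits {q d n a : ℕ} (h : checkDigits q d n a = true) {j : ℕ}
    (hj : j < 2 ^ d) : (n + j) * (a / q ^ (j + 1) % q) ^ 2 <
      (n + j + 1) * ((a / q ^ j % q) * (a / q ^ (j + 2) % q)) := by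
  induction d generalizing n a j with
  | zero =>
    obtain rfl : j = 0 := by simpa using hj
    simpa [checkDigits, Nat.blt_eq] using h
  | succ d ih =>
    rw [checkDigits, Bool.and_eq_true] at h
    rcases lt_or_ge j (2 ^ d) with hjd | hjd
    · exact ih h.1 hjd
    · obtain ⟨i, rfl⟩ := Nat.exists_eq_add_of_le hjd
      have hi := ih h.2 (j := i) (by rw [pow_succ] at hj; lia)
      simp only [Nat.div_div_eq_div_mul, ← pow_add] at hi
      simpa only [add_assoc] using hi

set_option maxRecDepth 100000 in
set_option exponentiation.threshold 1000000 in
theorem checkDigits_packedPartitions :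
    checkDigits (2 ^ 256) 12 2 (packedPartitions / 2 ^ 256) = true := by
  decide +kernel

theorem mul_p_sq_lt_of_lt {n : ℕ} (hn : 1 < n) (hn' : n < 4098) :
    n * p n ^ 2 < (n + 1) * (p (n - 1) * p (n + 1)) := by
  obtain ⟨j, rfl⟩ := Nat.exists_eq_add_of_le' (show 2 ≤ n from hn)
  have hlt := lt_of_checkDigits checkDigits_packedPartitions (j := j) (by lia)
  simp only [Nat.div_div_eq_div_mul, ← pow_succ'] at hlt
  rw [packedPartitions_div_pow_mod (by lia), packedPartitions_div_pow_mod (by lia),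
    packedPartitions_div_pow_mod (by lia), add_comm 2 j] at hlt
  simp only [p, Nat.add_succ_sub_one]
  exact_mod_cast hlt

theorem mul_p_sq_lt {n : ℕ} (hn : 1 < n) : n * p n ^ 2 < (n + 1) * (p (n - 1) * p (n + 1)) :=
  (lt_or_ge n 4098).elim (mul_p_sq_lt_of_lt hn) mul_p_sq_lt_of_le

end PartitionRatio

theorem partition_ratio_ineq (n : ℕ) (hn : 1 < n) :
    p (n - 1) / p n * (1 + 1 / (n : ℝ)) > p n / p (n + 1) := by
  have hn0 : (0 : ℝ) < n := by exact_mod_cast zero_lt_one.trans hn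
  have hp := PartitionRatio.p_pos n
  have hp' := PartitionRatio.p_pos (n + 1)
  rw [gt_iff_lt, one_add_div hn0.ne', div_mul_div_comm, div_lt_div_iff₀ hp' (by positivity)]
  linarith [PartitionRatio.mul_p_sq_lt hn]
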